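/- arXiv:2511.02338 — 2 statements merged into one kernel-verified Lean document; each statement's English description precedes it below -/
import Mathlib

section
/- Let h ∈ L∞([0,∞); H³_μ) be a solution of the heat equation ∂ₜh = ∂_z²h on (0,∞) × ℝ₊ with boundary condition h(t,0) = 0, whose initial datum h₀ ∈ H³_{μ_in}(ℝ₊) satisfies ∫₀^∞ z h₀(z) dz = 0. Then for every 0 < δ < 2 there is a constant C_δ > 0 depending only on δ such that for all t ≥ 0: ‖∂_z h(t)‖_{L∞_z} + ‖z ∂_z h(t)‖_{L∞_z} + ‖z ∂_z² h(t)‖_{L∞_z} ≤ C_δ ‖h₀‖_{H³_{μ_in}} (1+t)^{−(8−δ)/4}. -/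
open MeasureTheory Filter Set

noncomputable section

/-- The Gaussian weight `μ_λ(t,z) = exp(λz²/(4(1+t)))`. -/
def mu (lam t z : ℝ) : ℝ := Real.exp (lam * z ^ 2 / (4 * (1 + t)))

/-- The squared weighted norm `‖h‖²_{L²_{μ_λ}} = ∫₀^∞ μ_λ(t,z) h(z)² dz`. -/
def L2muSq (lam t : ℝ) (h : ℝ → ℝ) : ENNReal :=
  ∫⁻ z in Set.Ioi (0 : ℝ), ENNReal.ofReal (mu lam t z * h z ^ 2)

/-- The squared weighted Sobolev norm `‖h‖²_{H^m_{μ_λ}} = Σ_{i=0}^m ‖∂_z^i h‖²_{L²_{μ_λ}}`. -/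
def HmuSq (m : ℕ) (lam t : ℝ) (h : ℝ → ℝ) : ENNReal :=
  ∑ i ∈ Finset.range (m + 1), L2muSq lam t (deriv^[i] h)

/-- Sup norm over `(0, ∞)`, valued in `ℝ≥0∞`. -/
def linfPos (h : ℝ → ℝ) : ENNReal := ⨆ z ∈ Set.Ioi (0 : ℝ), ENNReal.ofReal |h z|

/-- The `L∞` norm of a pair, `(‖h₁‖²_{L∞} + ‖h₂‖²_{L∞})^{1/2}`. -/
def pairLinf (h₁ h₂ : ℝ → ℝ) : ENNReal :=
  (linfPos h₁ ^ 2 + linfPos h₂ ^ 2) ^ (1 / 2 : ℝ)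

/-- Weighted energy inequality with polynomial cutoff. -/
lemma energy1d (R ρ σ : ℝ) (hR : 0 < R) (hρ : ρ * R ^ 2 = 1) (hσ : 0 < σ)
    (f f1 f2 : ℝ → ℝ) (cf : Continuous f) (cf1 : Continuous f1) (cf2 : Continuous f2)
    (df : ∀ z > 0, HasDerivAt f (f1 z) z) (df1 : ∀ z > 0, HasDerivAt f1 (f2 z) z)
    (h0 : f 0 * f1 0 = 0) :
    (∫ z in (0:ℝ)..R, (1 - ρ * z ^ 2) ^ 2 *
        (-(4 * σ ^ 2 * z ^ 2) * Real.exp (σ * z ^ 2) * f z ^ 2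
          + 2 * Real.exp (σ * z ^ 2) * f z * f2 z))
      ≤ -2 * (∫ z in (0:ℝ)..R, (1 - ρ * z ^ 2) ^ 2 * (Real.exp (σ * z ^ 2) * f1 z ^ 2))
        + 2 * σ * (∫ z in (0:ℝ)..R, (1 - ρ * z ^ 2) ^ 2 * (Real.exp (σ * z ^ 2) * f z ^ 2))
        + 8 * ρ * (∫ z in (0:ℝ)..R, Real.exp (σ * z ^ 2) * f z ^ 2) := by
  have hρ0 : 0 < ρ := by
    by_contra hc
    push Not at hc
    nlinarith [sq_nonneg R]
  have hw : ∀ z : ℝ, HasDerivAt (fun z => Real.exp (σ * z ^ 2))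
      (Real.exp (σ * z ^ 2) * (σ * (2 * z))) z := by
    intro z
    have := ((hasDerivAt_pow 2 z).const_mul σ).exp
    simpa using this
  have hu : ∀ z : ℝ, HasDerivAt (fun z => 1 - ρ * z ^ 2) (-(ρ * (2 * z))) z := by
    intro z
    have := ((hasDerivAt_pow 2 z).const_mul ρ).const_sub 1
    simpa using this
  set Φ : ℝ → ℝ := fun z => (((1 - ρ * z ^ 2) * ((-(4 * ρ) * z + (1 - ρ * z ^ 2) * (2 * σ * z)) * (f z * f z)
      - 2 * (1 - ρ * z ^ 2) * (f z * f1 z))) * Real.exp (σ * z ^ 2)) with hΦ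
  have key := intervalIntegral.sub_le_integral_of_hasDeriv_right_of_le (a := 0) (b := R) hR.le
    (g := Φ)
    (g' := fun z => deriv Φ z)
    (φ := fun z => (-2 * ((1 - ρ * z ^ 2) ^ 2 * (Real.exp (σ * z ^ 2) * f1 z ^ 2))
        + 2 * σ * ((1 - ρ * z ^ 2) ^ 2 * (Real.exp (σ * z ^ 2) * f z ^ 2))
        + 8 * ρ * (Real.exp (σ * z ^ 2) * f z ^ 2))
        - (1 - ρ * z ^ 2) ^ 2 *
        (-(4 * σ ^ 2 * z ^ 2) * Real.exp (σ * z ^ 2) * f z ^ 2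
          + 2 * Real.exp (σ * z ^ 2) * f z * f2 z))
    (by rw [hΦ]; fun_prop) ?_ ?_ ?_
  · have e0 : Φ 0 = 0 := by simp only [hΦ]; linear_combination (-2) * Real.exp (σ * 0 ^ 2) * h0
    have eR : Φ R = 0 := by
      have : 1 - ρ * R ^ 2 = 0 := by linarith
      simp only [hΦ, this]; ring
    rw [e0, eR, intervalIntegral.integral_sub, intervalIntegral.integral_add,
      intervalIntegral.integral_add, intervalIntegral.integral_const_mul,
      intervalIntegral.integral_const_mul, intervalIntegral.integral_const_mul] at key
    · linarith
    all_goals exact Continuous.intervalIntegrable (by fun_prop) _ _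
  · intro z hz
    have hd : DifferentiableAt ℝ Φ z := by
      have := (df z hz.1).differentiableAt
      have := (df1 z hz.1).differentiableAt
      rw [hΦ]; fun_prop
    exact hd.hasDerivAt.hasDerivWithinAt
  · exact (Continuous.integrableOn_Icc (by fun_prop))
  · intro z hz
    have hd : HasDerivAt Φ _ z :=
      ((hu z).mul ((((((hasDerivAt_id z).const_mul (-(4*ρ))).add
        ((hu z).mul ((hasDerivAt_id z).const_mul (2*σ)))).mul ((df z hz.1).mul (df z hz.1)))).sub
        (((hu z).const_mul 2).mul ((df z hz.1).mul (df1 z hz.1))))).mul (hw z)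
    rw [hd.deriv]
    have hz2 : ρ * z ^ 2 ≤ 1 := by
      rw [← hρ]; have := hz.1; have := hz.2; gcongr
    have hE := Real.exp_pos (σ * z ^ 2)
    set E := Real.exp (σ * z ^ 2)
    have e1 : 0 ≤ E * f z ^ 2 * (4 * ρ * (1 - ρ * z ^ 2) + 8 * ρ * (1 - ρ * z ^ 2)
        + 16 * ρ * σ * z ^ 2 * (1 - ρ * z ^ 2)) := by
      have : 0 ≤ 1 - ρ * z ^ 2 := by linarith
      positivity
    simp only [id, Pi.mul_apply, Pi.add_apply, Pi.sub_apply]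
    nlinarith [e1]

lemma poincare1d (R ρ σ ε : ℝ) (hR : 0 < R) (hρ : ρ * R ^ 2 = 1) (hσ : 0 < σ)
    (hε : 0 < ε) (hε2 : ε < 1 / 2)
    (f f1 : ℝ → ℝ) (cf : Continuous f) (cf1 : Continuous f1)
    (df : ∀ z ≥ 0, HasDerivAt f (f1 z) z) 
    (h0 : f 0 = 0) :
    4 * σ * (1 - 3 * ε) * (∫ z in (0:ℝ)..R, (1 - ρ * z ^ 2) ^ 2 * (Real.exp (σ * z ^ 2) * f z ^ 2))
      ≤ (∫ z in (0:ℝ)..R, (1 - ρ * z ^ 2) ^ 2 * (Real.exp (σ * z ^ 2) * f1 z ^ 2))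
        + 2 * ρ / ε * (∫ z in (0:ℝ)..R, Real.exp (σ * z ^ 2) * f z ^ 2) := by
  have hρ0 : 0 < ρ := by
    by_contra hc
    push Not at hc
    nlinarith [sq_nonneg R]
  have hw : ∀ z : ℝ, HasDerivAt (fun z => Real.exp (σ * z ^ 2))
      (Real.exp (σ * z ^ 2) * (σ * (2 * z))) z := by
    intro z
    have := ((hasDerivAt_pow 2 z).const_mul σ).exp
    simpa using this
  have hu : ∀ z : ℝ, HasDerivAt (fun z => 1 - ρ * z ^ 2) (-(ρ * (2 * z))) z := by
    intro z
    have := ((hasDerivAt_pow 2 z).const_mul ρ).const_sub 1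
    simpa using this
  set b : ℝ := 2 * σ - 4 * ε * σ with hb
  have hb0 : 0 < b := by rw [hb]; nlinarith
  set Ψ : ℝ → ℝ := fun z => f z ^ 2 / z with hΨ
  have cΨ : ContinuousOn Ψ (Icc 0 R) := by
    intro z hz
    rcases hz.1.eq_or_lt with h | h
    · subst h
      have h1 : HasDerivAt (fun z => f z ^ 2) 0 0 := by
        have h2 := (df 0 le_rfl).fun_pow 2
        rw [h0] at h2
        simpa using h2
      rw [hasDerivAt_iff_tendsto_slope] at h1
      apply ContinuousAt.continuousWithinAt
      rw [continuousAt_iff_punctured_nhds]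
      have e : Ψ 0 = 0 := by simp [hΨ]
      rw [e]
      refine h1.congr' (Eventually.of_forall fun z => ?_)
      simp [slope_def_field, h0, hΨ]
    · apply ContinuousAt.continuousWithinAt
      have := h.ne'
      exact (cf.continuousAt.pow 2).div continuousAt_id this
  set Φ : ℝ → ℝ := fun z => ((1 - ρ * z ^ 2) ^ 2 * Real.exp (σ * z ^ 2)) * (Ψ z - b * z * f z ^ 2) with hΦ
  have hdΦ : ∀ z > 0, HasDerivAt Φ _ z := fun z hz =>
      (((hu z).pow 2).mul (hw z)).mul ((((df z hz.le).pow 2).div (hasDerivAt_id z) hz.ne').sub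
        (((hasDerivAt_id z).const_mul b).mul ((df z hz.le).pow 2)))
  have key := intervalIntegral.sub_le_integral_of_hasDeriv_right_of_le (a := 0) (b := R) hR.le
    (g := Φ)
    (g' := fun z => deriv Φ z)
    (φ := fun z => ((1 - ρ * z ^ 2) ^ 2 * (Real.exp (σ * z ^ 2) * f1 z ^ 2))
        + 2 * ρ / ε * (Real.exp (σ * z ^ 2) * f z ^ 2)
        - 4 * σ * (1 - 3 * ε) * ((1 - ρ * z ^ 2) ^ 2 * (Real.exp (σ * z ^ 2) * f z ^ 2)))
    (by
      rw [hΦ]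
      exact (Continuous.continuousOn (by fun_prop)).mul
        (cΨ.sub (Continuous.continuousOn (by fun_prop)))) ?_ ?_ ?_
  · have e0 : Φ 0 = 0 := by simp [hΦ, hΨ]
    have eR : Φ R = 0 := by
      have : 1 - ρ * R ^ 2 = 0 := by linarith
      simp only [hΦ, this]; ring
    rw [e0, eR, intervalIntegral.integral_sub, intervalIntegral.integral_add,
      intervalIntegral.integral_const_mul,
      intervalIntegral.integral_const_mul] at key
    · linarith
    all_goals exact Continuous.intervalIntegrable (by fun_prop) _ _
  · intro z hz
    exact (hdΦ z hz.1).differentiableAt.hasDerivAt.hasDerivWithinAt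
  · exact (Continuous.integrableOn_Icc (by fun_prop))
  · intro z hz
    have hz0 : 0 < z := hz.1
    rw [(hdΦ z hz.1).deriv]
    have hz2 : ρ * z ^ 2 ≤ 1 := by
      rw [← hρ]; have := hz.1; have := hz.2; gcongr
    have hE := Real.exp_pos (σ * z ^ 2)
    simp only [id, Pi.mul_apply, Pi.pow_apply]
    generalize Real.exp (σ * z ^ 2) = E at hE ⊢
    generalize f1 z = y
    obtain ⟨q, hq⟩ : ∃ q, f z = q * z := ⟨f z / z, by field_simp⟩
    rw [hq]
    have hu0 : 0 ≤ 1 - ρ * z ^ 2 := by linarith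
    have e1 : 0 ≤ 4 * ρ / (4 * ε * σ) * b * (1 - ρ * z^2) := by positivity
    have e3 : 0 ≤ 4 * ε * σ * b * z ^ 2 * ((1 - ρ * z ^ 2) - 2 * ρ / (4 * ε * σ)) ^ 2 := by positivity
    have e4 : 2 * ρ / ε = 4 * b * ρ / (4 * ε * σ) + 4 * ρ := by
      rw [hb]; field_simp; ring
    have e5 : 0 ≤ 4 * ρ * (1 - ρ * z ^ 2) := by positivity
    have e6 : (q * z) ^ 2 / z = q ^ 2 * z := by field_simp
    have e6' : Ψ z = q ^ 2 * z := by simp only [hΨ, hq, e6]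
    rw [e6']
    push_cast
    have e8 : ((2:ℝ) * (q * z) ^ (2 - 1) * y * z - (q * z) ^ 2 * 1) / z ^ 2 = 2 * q * y - q ^ 2 := by
      field_simp
      norm_num
      ring
    rw [e8, e4]
    have hκ : 0 < 4 * ε * σ := by positivity
    have hbκ : 2 * σ = b + 4 * ε * σ := by rw [hb]; ring
    have main : 0 ≤ E * ((1 - ρ * z ^ 2) ^ 2 * (y - q + b * z ^ 2 * q) ^ 2 + (q * z) ^ 2 *
      (4 * ρ / (4 * ε * σ) * b * (1 - ρ * z^2) + 4 * ε * σ * b * z ^ 2 * ((1 - ρ * z ^ 2) - 2 * ρ / (4 * ε * σ)) ^ 2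
        + 4 * ρ * (1 - ρ * z ^ 2) + 4 * ρ)) := by positivity
    clear_value b
    have hσ2 : σ = (b + 4 * ε * σ) / 2 := by linarith
    generalize hκd : 4 * ε * σ = κ at *
    have hes : ε * σ = κ / 4 := by linarith
    have h34 : 4 * σ * (1 - 3 * ε) = 2 * b - κ := by linarith
    rw [h34, hσ2]
    rw [← sub_nonneg]
    refine main.trans_eq ?_
    norm_num
    field_simp
    ring

/-- The exponent rate of the weight at time `t`. -/
def sg (t : ℝ) : ℝ := 1 / (4 * (1 + t))

lemma sg_pos {t : ℝ} (ht : 0 ≤ t) : 0 < sg t := by unfold sg; positivity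

lemma sg_deriv {t : ℝ} (ht : 0 ≤ t) : HasDerivAt sg (-(4 * sg t ^ 2)) t := by
  have h1 : HasDerivAt (fun t : ℝ => 4 * (1 + t)) 4 t := by
    simpa using ((hasDerivAt_id t).const_add 1).const_mul 4
  have h2 := h1.inv (by positivity)
  have e : sg = fun t => (4 * (1 + t))⁻¹ := by funext t; simp [sg]
  rw [e]
  refine h2.congr_deriv ?_
  field_simp

lemma sg_cont : ContinuousOn sg (Ici 0) := fun t ht =>
  (sg_deriv (mem_Ici.1 ht)).continuousAt.continuousWithinAt

/-- Weighted local energy. -/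
def QQ (R : ℝ) (v : ℝ → ℝ) (g : ℝ → ℝ → ℝ) (t : ℝ) : ℝ :=
  ∫ z in (0:ℝ)..R, v z * (Real.exp (sg t * z ^ 2) * g t z ^ 2)

lemma QQ_cont (R : ℝ) (v : ℝ → ℝ) (g : ℝ → ℝ → ℝ) (hv : Continuous v)
    (hg : Continuous fun p : ℝ × ℝ => g p.1 p.2) : ContinuousOn (QQ R v g) (Ici 0) := by
  have c1 : Continuous (fun t : ℝ => sg (max t 0)) :=
    sg_cont.comp_continuous (by fun_prop) (fun t => mem_Ici.2 (le_max_right t 0))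
  have c2 : Continuous (fun p : ℝ × ℝ => sg (max p.1 0)) := c1.comp continuous_fst
  have c3 : Continuous (fun t : ℝ => QQ R v g (max t 0)) := by
    unfold QQ
    apply intervalIntegral.continuous_parametric_intervalIntegral_of_continuous'
    have c4 : Continuous (fun p : ℝ × ℝ => g (max p.1 0) p.2) :=
      hg.comp (f := fun p : ℝ × ℝ => (max p.1 0, p.2)) (by fun_prop)
    unfold Function.uncurry
    fun_prop
  refine c3.continuousOn.congr fun t ht => ?_
  simp only [max_eq_left (mem_Ici.1 ht)]

lemma QQ_deriv (R : ℝ) (hR : 0 < R) (v : ℝ → ℝ) (g g2 : ℝ → ℝ → ℝ) (hv : Continuous v)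
    (hg : Continuous fun p : ℝ × ℝ => g p.1 p.2) (hg2 : Continuous fun p : ℝ × ℝ => g2 p.1 p.2)
    (hd : ∀ t > 0, ∀ z > 0, HasDerivAt (fun s => g s z) (g2 t z) t) (t : ℝ) (ht : 0 < t) :
    HasDerivAt (QQ R v g) (∫ z in (0:ℝ)..R, v z *
        (-(4 * sg t ^ 2 * z ^ 2) * Real.exp (sg t * z ^ 2) * g t z ^ 2
          + 2 * Real.exp (sg t * z ^ 2) * g t z * g2 t z)) t := by
  set G' : ℝ → ℝ → ℝ := fun t z => v z *
        (-(4 * sg t ^ 2 * z ^ 2) * Real.exp (sg t * z ^ 2) * g t z ^ 2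
          + 2 * Real.exp (sg t * z ^ 2) * g t z * g2 t z) with hG'
  have hc : ContinuousOn (fun p : ℝ × ℝ => G' p.1 p.2) (Icc (t/2) (2*t) ×ˢ Icc 0 R) := by
    have : ContinuousOn (fun p : ℝ × ℝ => sg p.1) (Icc (t/2) (2*t) ×ˢ Icc 0 R) := by
      refine sg_cont.comp continuous_fst.continuousOn fun p hp => ?_
      have := hp.1.1
      simp only [mem_Ici]; linarith
    simp only [hG']
    fun_prop
  obtain ⟨C, hC⟩ := (isCompact_Icc.prod isCompact_Icc).exists_bound_of_continuousOn hc
  have cz : ∀ t, Continuous (g t) := fun t => hg.comp (f := fun z => (t, z)) (by fun_prop)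
  have cz2 : ∀ t, Continuous (g2 t) := fun t => hg2.comp (f := fun z => (t, z)) (by fun_prop)
  refine (intervalIntegral.hasDerivAt_integral_of_dominated_loc_of_deriv_le
    (F := fun t z => v z * (Real.exp (sg t * z ^ 2) * g t z ^ 2)) (F' := G') (bound := fun _ => C)
    (s := Icc (t/2) (2*t)) (Icc_mem_nhds (by linarith) (by linarith)) ?_ ?_ ?_ ?_ ?_ ?_).2
  · refine Eventually.of_forall fun x => ?_
    have := cz x
    exact Continuous.aestronglyMeasurable (by fun_prop)
  · have := cz t
    exact Continuous.intervalIntegrable (by fun_prop) _ _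
  · have := cz t
    have := cz2 t
    exact Continuous.aestronglyMeasurable (by simp only [hG']; fun_prop)
  · refine Eventually.of_forall fun z hz x hx => ?_
    rw [uIoc_of_le hR.le] at hz
    exact hC (x, z) ⟨hx, hz.1.le, hz.2⟩
  · exact continuous_const.intervalIntegrable _ _
  · refine Eventually.of_forall fun z hz x hx => ?_
    rw [uIoc_of_le hR.le] at hz
    have hx0 : 0 < x := by have := hx.1; linarith
    have h1 := (((sg_deriv hx0.le).mul_const (z^2)).exp.mul ((hd x hx0 z hz.1).fun_pow 2)).const_mul (v z)
    refine h1.congr_deriv ?_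
    simp only [hG']
    push_cast
    ring

/-- A chain of solutions `g k = ∂_z^k g₀` of the heat equation on the half-line. -/
structure Chain (g : ℕ → ℝ → ℝ → ℝ) : Prop where
  cont : ∀ k, Continuous fun p : ℝ × ℝ => g k p.1 p.2
  dz : ∀ k, ∀ t > 0, ∀ z > 0, HasDerivAt (g k t) (g (k+1) t z) z
  dz0 : ∀ t > 0, HasDerivAt (g 0 t) (g 1 t 0) 0
  dt : ∀ k, ∀ t > 0, ∀ z > 0, HasDerivAt (fun s => g k s z) (g (k+2) t z) t
  bd : ∀ k, ∀ t > 0, g k t 0 * g (k+1) t 0 = 0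
  bd0 : ∀ t > 0, g 0 t 0 = 0

lemma Chain.contz {g : ℕ → ℝ → ℝ → ℝ} (hg : Chain g) (k : ℕ) (t : ℝ) : Continuous (g k t) :=
  (hg.cont k).comp (f := fun z => (t, z)) (by fun_prop)

lemma QQ_nonneg (R : ℝ) (hR : 0 < R) (v : ℝ → ℝ) (hv : ∀ z, 0 ≤ v z) (g : ℝ → ℝ → ℝ) (t : ℝ) :
    0 ≤ QQ R v g t := by
  unfold QQ
  apply intervalIntegral.integral_nonneg hR.le
  intro z _
  have := hv z
  positivity

/-- Crude local bound: `L²_μ` control of `∂_t g` gives that of `g`. -/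
lemma crude {g : ℕ → ℝ → ℝ → ℝ} (hg : Chain g) (k : ℕ) (R : ℝ) (hR : 0 < R) (T M E : ℝ)
    (hE : QQ R (fun _ => 1) (g k) 0 ≤ E)
    (hM : ∀ t, 0 < t → t ≤ T → QQ R (fun _ => 1) (g (k+2)) t ≤ M) (t : ℝ) (ht : 0 ≤ t) (htT : t ≤ T) :
    QQ R (fun _ => 1) (g k) t ≤ Real.exp t * (E + max M 0 * t) := by
  set Q := QQ R (fun _ => 1) (g k) with hQ
  set q' : ℝ → ℝ := fun t => ∫ z in (0:ℝ)..R, (1:ℝ) *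
        (-(4 * sg t ^ 2 * z ^ 2) * Real.exp (sg t * z ^ 2) * g k t z ^ 2
          + 2 * Real.exp (sg t * z ^ 2) * g k t z * g (k+2) t z)
  have hd : ∀ t > 0, HasDerivAt Q (q' t) t := fun t ht =>
    QQ_deriv R hR (fun _ => 1) (g k) (g (k+2)) continuous_const (hg.cont _) (hg.cont _) (hg.dt k) t ht
  have hq : ∀ t > 0, t ≤ T → q' t ≤ Q t + max M 0 := by
    intro t ht htT
    have h1 : q' t ≤ Q t + QQ R (fun _ => 1) (g (k+2)) t := by
      have := hg.contz k t
      have := hg.contz (k+2) t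
      simp only [q', hQ, QQ]
      rw [← intervalIntegral.integral_add]
      · apply intervalIntegral.integral_mono_on hR.le
        · exact Continuous.intervalIntegrable (by fun_prop) _ _
        · exact Continuous.intervalIntegrable (by fun_prop) _ _
        · intro z hz
          have hE := Real.exp_pos (sg t * z ^ 2)
          have e1 : 0 ≤ Real.exp (sg t * z ^ 2) * ((g k t z - g (k+2) t z) ^ 2 + 4 * sg t ^ 2 * z ^ 2 * g k t z ^ 2) := by positivity
          nlinarith [e1]
      all_goals exact Continuous.intervalIntegrable (by fun_prop) _ _
    exact h1.trans (by gcongr; exact (hM t ht htT).trans (le_max_left _ _))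
  have hde : ∀ t > 0, HasDerivAt (fun t => Real.exp (-t) * Q t)
      (Real.exp (-t) * (-1) * Q t + Real.exp (-t) * q' t) t := fun t ht =>
    ((hasDerivAt_id t).neg.exp).mul (hd t ht)
  have hcont : ContinuousOn (fun t => Real.exp (-t) * Q t) (Icc 0 T) := by
    have := (QQ_cont R (fun _ => 1) (g k) continuous_const (hg.cont k)).mono
      (fun x (hx : x ∈ Icc 0 T) => mem_Ici.2 hx.1)
    exact (Continuous.continuousOn (by fun_prop)).mul this
  have := (convex_Icc (0:ℝ) T).image_sub_le_mul_sub_of_deriv_le hcont (C := max M 0) ?_ ?_ 0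
    ⟨le_rfl, ht.trans htT⟩ t ⟨ht, htT⟩ ht
  · simp only [neg_zero, Real.exp_zero, one_mul, sub_zero] at this
    have h2 : Real.exp (-t) * Q t ≤ E + max M 0 * t := by linarith
    calc Q t = Real.exp t * (Real.exp (-t) * Q t) := by
            rw [← mul_assoc, ← Real.exp_add]; simp
      _ ≤ _ := by gcongr
  · rw [interior_Icc]
    exact fun x hx => (hde x hx.1).differentiableAt.differentiableWithinAt
  · rw [interior_Icc]
    intro x hx
    rw [(hde x hx.1).deriv]
    have h1 := hq x hx.1 hx.2.le
    have h2 : Real.exp (-x) ≤ 1 := Real.exp_le_one_iff.2 (by linarith [hx.1])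
    have h3 := Real.exp_pos (-x)
    have h4 : 0 ≤ max M 0 := le_max_right _ _
    nlinarith

/-- The polynomial cutoff. -/
def cut (ρ z : ℝ) : ℝ := (1 - ρ * z ^ 2) ^ 2

lemma cut_cont (ρ : ℝ) : Continuous (cut ρ) := by unfold cut; fun_prop

lemma alg_key (ε c Q0 X r : ℝ) (hε : 0 < ε) (hε1 : ε < 1) (hc : c = ε / 12) (q0 : 0 ≤ Q0)
    (hX : 0 ≤ X) (hr0 : 0 ≤ r) (hP2 : (1 - ε / 4) * Q0 ≤ X + r) :
    (2 - ε) * Q0 - (2 - (3 - ε) * c) * X ≤ 2 * r := by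
  have hc0 : 0 < c := by rw [hc]; positivity
  have h2 : 0 ≤ 2 - 3 * c := by linarith
  have h3 := mul_le_mul_of_nonneg_left hP2 h2
  have h4 : (2 - ε) * Q0 ≤ (2 - 3 * c) * ((1 - ε / 4) * Q0) := by
    rw [← mul_assoc]
    apply mul_le_mul_of_nonneg_right _ q0
    rw [hc]
    nlinarith
  have h5 : 0 ≤ ε * c * X := by positivity
  have h6 : 0 ≤ c * r := by positivity
  linarith

set_option maxHeartbeats 1000000 in
lemma alg_main (ε c p s ρ M Q0 Q1 Q2 Q3 Q4 Q5 Q6 L0 L1 L2 L3 L4 L5 : ℝ)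
    (hε : 0 < ε) (hε1 : ε < 1) (hc : c = ε / 12) (hp : p = 3 / 2 - ε) (hs : 1 ≤ s) (hρ : 0 ≤ ρ) (hM : 0 ≤ M)
    (q0 : 0 ≤ Q0) (q1 : 0 ≤ Q1) (q2 : 0 ≤ Q2) (q3 : 0 ≤ Q3) (q4 : 0 ≤ Q4) (q5 : 0 ≤ Q5) (q6 : 0 ≤ Q6)
    (l0 : s * L0 ≤ -2 * (s * Q1) + Q0 / 2 + 8 * ρ * M * s)
    (l1 : s * L1 ≤ -2 * (s * Q2) + Q1 / 2 + 8 * ρ * M * s)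
    (l2 : s * L2 ≤ -2 * (s * Q3) + Q2 / 2 + 8 * ρ * M * s)
    (l3 : s * L3 ≤ -2 * (s * Q4) + Q3 / 2 + 8 * ρ * M * s)
    (l4 : s * L4 ≤ -2 * (s * Q5) + Q4 / 2 + 8 * ρ * M * s)
    (l5 : s * L5 ≤ -2 * (s * Q6) + Q5 / 2 + 8 * ρ * M * s)
    (hP : (1 - ε / 4) * Q0 ≤ s * Q1 + 24 * ρ / ε * M * s) :
    p * (Q0 + c * s * Q1 + c / 4 * s ^ 2 * Q2 + c / 16 * s ^ 3 * Q3 + c / 64 * s ^ 4 * Q4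
        + c / 256 * s ^ 5 * Q5)
      + s * (L0 + (c * Q1 + c * s * L1) + (c / 4 * (2 * s) * Q2 + c / 4 * s ^ 2 * L2)
        + (c / 16 * (3 * s ^ 2) * Q3 + c / 16 * s ^ 3 * L3)
        + (c / 64 * (4 * s ^ 3) * Q4 + c / 64 * s ^ 4 * L4)
        + (c / 256 * (5 * s ^ 4) * Q5 + c / 256 * s ^ 5 * L5))
      ≤ ρ * ((48 + 48 / ε) * M * s ^ 6) := by
  have hs0 : 0 < s := by linarith
  have hc0 : 0 < c := by rw [hc]; positivity
  have hc1 : c ≤ 1 / 12 := by rw [hc]; linarith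
  have hp' : p ≤ 3 / 2 := by linarith
  set e := 8 * ρ * M * s with he
  have he0 : 0 ≤ e := by positivity
  have m1 := mul_le_mul_of_nonneg_left l1 (by positivity : 0 ≤ c * s)
  have m2 := mul_le_mul_of_nonneg_left l2 (by positivity : 0 ≤ c / 4 * s ^ 2)
  have m3 := mul_le_mul_of_nonneg_left l3 (by positivity : 0 ≤ c / 16 * s ^ 3)
  have m4 := mul_le_mul_of_nonneg_left l4 (by positivity : 0 ≤ c / 64 * s ^ 4)
  have m5 := mul_le_mul_of_nonneg_left l5 (by positivity : 0 ≤ c / 256 * s ^ 5)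
  have x1 : 0 ≤ s * Q1 := by positivity
  have x2 : 0 ≤ c * (s ^ 2 * Q2) := by positivity
  have x3 : 0 ≤ c * (s ^ 3 * Q3) := by positivity
  have x4 : 0 ≤ c * (s ^ 4 * Q4) := by positivity
  have x5 : 0 ≤ c * (s ^ 5 * Q5) := by positivity
  have x6 : 0 ≤ c * (s ^ 6 * Q6) := by positivity
  have pw : ∀ k ≤ 5, s ^ k ≤ s ^ 5 := fun k hk => pow_le_pow_right₀ hs hk
  have s5 : 1 ≤ s ^ 5 := one_le_pow₀ hs
  have ak : ∀ c' k, 0 ≤ c' → c' ≤ 1 → k ≤ 5 → c' * s ^ k * e ≤ s ^ 5 * e := by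
    intro c' k h1 h2 h3
    have h4 := pw k h3
    have h5 : 0 ≤ s ^ k := by positivity
    have h6 : c' * s ^ k ≤ s ^ 5 := (mul_le_of_le_one_left h5 h2).trans h4
    exact mul_le_mul_of_nonneg_right h6 he0
  have a1 := ak c 1 hc0.le (by linarith) (by norm_num)
  rw [pow_one] at a1
  have a2 := ak (c / 4) 2 (by positivity) (by linarith) (by norm_num)
  have a3 := ak (c / 16) 3 (by positivity) (by linarith) (by norm_num)
  have a4 := ak (c / 64) 4 (by positivity) (by linarith) (by norm_num)
  have a5 := ak (c / 256) 5 (by positivity) (by linarith) (by norm_num)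
  have a0 : e ≤ s ^ 5 * e := le_mul_of_one_le_left he0 s5
  have hes : s ^ 5 * e = ρ * (8 * M * s ^ 6) := by rw [he]; ring
  -- Poincare
  have hr : 24 * ρ / ε * M * s ≤ ρ * (24 / ε * M * s ^ 6) := by
    have : s ≤ s ^ 6 := le_self_pow₀ hs (by norm_num)
    calc 24 * ρ / ε * M * s = ρ * (24 / ε * M * s) := by ring
      _ ≤ _ := by gcongr
  set r := ρ * (24 / ε * M * s ^ 6) with hrd
  have hr0 : 0 ≤ r := by positivity
  have hP2 : (1 - ε / 4) * Q0 ≤ s * Q1 + r := by linarith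
  have key : (2 - ε) * Q0 - (2 - (3 - ε) * c) * (s * Q1) ≤ 2 * r := by
    exact alg_key ε c Q0 (s * Q1) r hε hε1 hc q0 x1 hr0 hP2
  have tot : ρ * ((48 + 48 / ε) * M * s ^ 6) = 6 * (s ^ 5 * e) + 2 * r := by
    rw [hes, hrd]; ring
  rw [tot]
  have b2 : p * (c * (s ^ 2 * Q2)) ≤ 3 / 2 * (c * (s ^ 2 * Q2)) := by gcongr
  have b3 : p * (c * (s ^ 3 * Q3)) ≤ 3 / 2 * (c * (s ^ 3 * Q3)) := by gcongr
  have b4 : p * (c * (s ^ 4 * Q4)) ≤ 3 / 2 * (c * (s ^ 4 * Q4)) := by gcongr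
  have b5 : p * (c * (s ^ 5 * Q5)) ≤ 3 / 2 * (c * (s ^ 5 * Q5)) := by gcongr
  subst hp
  ring_nf at *
  linarith

lemma pick6 (c s : ℝ) (hc0 : 0 ≤ c) (hc1 : c ≤ 1) (hs : 0 ≤ s) (q : ℕ → ℝ) (hq : ∀ k, 0 ≤ q k)
    (k : ℕ) (hk : k < 6) : c / 256 * s ^ k * q k ≤ q 0 + c * s * q 1 + c / 4 * s ^ 2 * q 2
        + c / 16 * s ^ 3 * q 3 + c / 64 * s ^ 4 * q 4 + c / 256 * s ^ 5 * q 5 := by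
  have y : ∀ j, 0 ≤ c * (s ^ j * q j) := fun j =>
    mul_nonneg hc0 (mul_nonneg (by positivity) (hq j))
  have y0 := y 0
  have y1 := y 1
  have y2 := y 2
  have y3 := y 3
  have y4 := y 4
  have y5 := y 5
  have y00 : c * q 0 ≤ q 0 := mul_le_of_le_one_left (hq 0) hc1
  interval_cases k
  all_goals
    ring_nf at *
    linarith

set_option maxHeartbeats 2000000 in
lemma chain_R {g : ℕ → ℝ → ℝ → ℝ} (hg : Chain g) (ε : ℝ) (hε : 0 < ε) (hε1 : ε < 1)
    (R : ℝ) (hR : 0 < R) (T M E : ℝ) (hM0 : 0 ≤ M) (hT : 0 ≤ T)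
    (hE : ∀ k < 6, QQ R (fun _ => 1) (g k) 0 ≤ E)
    (hM : ∀ t, 0 < t → t ≤ T → ∀ k < 6, QQ R (fun _ => 1) (g k) t ≤ M) :
    ∀ k < 6, ε / 12 / 256 * (1 + T) ^ (3 / 2 - ε) * (1 + T) ^ k * QQ R (cut (1 / R ^ 2)) (g k) T
      ≤ 6 * E + (1 / R ^ 2) * ((1 + T) ^ 2 * ((48 + 48 / ε) * M * (1 + T) ^ 6) * T) := by
  set ρ := 1 / R ^ 2 with hρ
  have hρ0 : 0 < ρ := by positivity
  have hρR : ρ * R ^ 2 = 1 := by rw [hρ]; field_simp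
  set c := ε / 12 with hc
  have hc0 : 0 < c := by positivity
  set p := 3 / 2 - ε with hp
  have hp0 : 0 < p := by linarith
  set Q : ℕ → ℝ → ℝ := fun k => QQ R (cut ρ) (g k) with hQ
  have hQ0 : ∀ k t, 0 ≤ Q k t := fun k t =>
    QQ_nonneg R hR _ (fun z => by unfold cut; positivity) _ _
  have hQB : ∀ k t, Q k t ≤ QQ R (fun _ => 1) (g k) t := by
    intro k t
    have := hg.contz k t
    have := cut_cont ρ
    simp only [hQ, QQ]
    apply intervalIntegral.integral_mono_on hR.le
    · exact Continuous.intervalIntegrable (by fun_prop) _ _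
    · exact Continuous.intervalIntegrable (by fun_prop) _ _
    · intro z hz
      gcongr
      have hz2 : ρ * z ^ 2 ≤ 1 := by
        rw [← hρR]; have := hz.1; have := hz.2; gcongr
      have : 0 ≤ ρ * z ^ 2 := by positivity
      unfold cut
      nlinarith
  set L : ℕ → ℝ → ℝ := fun k t => ∫ z in (0:ℝ)..R, (cut ρ z) *
        (-(4 * sg t ^ 2 * z ^ 2) * Real.exp (sg t * z ^ 2) * g k t z ^ 2
          + 2 * Real.exp (sg t * z ^ 2) * g k t z * g (k+2) t z) with hL
  have hQd : ∀ k, ∀ t > 0, HasDerivAt (Q k) (L k t) t := fun k t ht =>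
    QQ_deriv R hR (cut ρ) (g k) (g (k+2)) (cut_cont ρ) (hg.cont _) (hg.cont _) (hg.dt k) t ht
  have hQc : ∀ k, ContinuousOn (Q k) (Ici 0) := fun k => QQ_cont R _ _ (cut_cont ρ) (hg.cont k)
  have hLle : ∀ k < 6, ∀ t, 0 < t → t ≤ T → (1 + t) * L k t ≤
      -2 * ((1 + t) * Q (k+1) t) + Q k t / 2 + 8 * ρ * M * (1 + t) := by
    intro k hk t ht htT
    have h1 := energy1d R ρ (sg t) hR hρR (sg_pos ht.le) (g k t) (g (k+1) t) (g (k+2) t)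
      (hg.contz _ _) (hg.contz _ _) (hg.contz _ _) (hg.dz k t ht) (hg.dz (k+1) t ht) (hg.bd k t ht)
    have h2 : L k t ≤ -2 * Q (k+1) t + 2 * sg t * Q k t + 8 * ρ * QQ R (fun _ => 1) (g k) t := by
      simpa only [hL, hQ, QQ, cut, one_mul] using h1
    have h3 : L k t ≤ -2 * Q (k+1) t + 2 * sg t * Q k t + 8 * ρ * M := by
      refine h2.trans ?_
      gcongr
      exact hM t ht htT k hk
    have h4 : (1 + t) * sg t = 1 / 4 := by unfold sg; field_simp
    have h5 := mul_le_mul_of_nonneg_left h3 (by linarith : 0 ≤ 1 + t)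
    have h6 : (1 + t) * (2 * sg t * Q k t) = Q k t / 2 := by
      linear_combination 2 * Q k t * h4
    linarith
  have hPo : ∀ t, 0 < t → t ≤ T → (1 - ε / 4) * Q 0 t ≤ (1 + t) * Q 1 t + 24 * ρ / ε * M * (1 + t) := by
    intro t ht htT
    have h1 := poincare1d R ρ (sg t) (ε / 12) hR hρR (sg_pos ht.le) (by positivity) (by linarith)
      (g 0 t) (g 1 t) (hg.contz _ _) (hg.contz _ _) (fun z hz => by
        rcases (show (0:ℝ) ≤ z from hz).eq_or_lt with h | h
        · subst h; exact hg.dz0 t ht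
        · exact hg.dz 0 t ht z h) (hg.bd0 t ht)
    have h2 : 4 * sg t * (1 - 3 * (ε / 12)) * Q 0 t ≤ Q 1 t + 2 * ρ / (ε / 12) * QQ R (fun _ => 1) (g 0) t := by
      simpa only [hQ, QQ, cut, one_mul] using h1
    have h3 : 4 * sg t * (1 - 3 * (ε / 12)) * Q 0 t ≤ Q 1 t + 2 * ρ / (ε / 12) * M := by
      refine h2.trans ?_
      gcongr
      exact hM t ht htT 0 (by norm_num)
    have h4 : (1 + t) * sg t = 1 / 4 := by unfold sg; field_simp
    have h5 := mul_le_mul_of_nonneg_left h3 (by linarith : 0 ≤ 1 + t)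
    have h6 : 2 * ρ / (ε / 12) = 24 * ρ / ε := by field_simp; norm_num
    rw [h6] at h5
    have h7 : (1 + t) * (4 * sg t * (1 - 3 * (ε / 12)) * Q 0 t) = (1 - ε / 4) * Q 0 t := by
      linear_combination 4 * (1 - 3 * (ε / 12)) * Q 0 t * h4
    linarith
  set S : ℝ → ℝ := fun t => Q 0 t + c * (1+t) * Q 1 t + c / 4 * (1+t) ^ 2 * Q 2 t
        + c / 16 * (1+t) ^ 3 * Q 3 t + c / 64 * (1+t) ^ 4 * Q 4 t
        + c / 256 * (1+t) ^ 5 * Q 5 t with hS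
  set S' : ℝ → ℝ := fun t => (L 0 t + (c * Q 1 t + c * (1+t) * L 1 t)
        + (c / 4 * (2 * (1+t)) * Q 2 t + c / 4 * (1+t) ^ 2 * L 2 t)
        + (c / 16 * (3 * (1+t) ^ 2) * Q 3 t + c / 16 * (1+t) ^ 3 * L 3 t)
        + (c / 64 * (4 * (1+t) ^ 3) * Q 4 t + c / 64 * (1+t) ^ 4 * L 4 t)
        + (c / 256 * (5 * (1+t) ^ 4) * Q 5 t + c / 256 * (1+t) ^ 5 * L 5 t)) with hS'
  have hSd : ∀ t > 0, HasDerivAt S (S' t) t := by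
    intro t ht
    have h1 : HasDerivAt (fun t : ℝ => 1 + t) 1 t := (hasDerivAt_id t).const_add 1
    have := ((((((hQd 0 t ht).add ((h1.const_mul c).mul (hQd 1 t ht))).add
      (((h1.fun_pow 2).const_mul (c/4)).mul (hQd 2 t ht))).add
      (((h1.fun_pow 3).const_mul (c/16)).mul (hQd 3 t ht))).add
      (((h1.fun_pow 4).const_mul (c/64)).mul (hQd 4 t ht))).add
      (((h1.fun_pow 5).const_mul (c/256)).mul (hQd 5 t ht)))
    refine this.congr_deriv ?_
    simp only [hS']
    norm_num
  have hSc : ContinuousOn S (Ici 0) := by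
    have h0 := hQc 0
    have h1 := hQc 1
    have h2 := hQc 2
    have h3 := hQc 3
    have h4 := hQc 4
    have h5 := hQc 5
    simp only [hS]
    fun_prop
  have hPd : ∀ t > 0, HasDerivAt (fun t => (1 + t) ^ p) (p * (1 + t) ^ p / (1 + t)) t := by
    intro t ht
    have h1 : HasDerivAt (fun t : ℝ => 1 + t) 1 t := (hasDerivAt_id t).const_add 1
    have h2 := h1.rpow_const (p := p) (Or.inl (by positivity))
    refine h2.congr_deriv ?_
    rw [Real.rpow_sub_one (by positivity)]
    ring
  set K := (1 + T) ^ 2 * ((48 + 48 / ε) * M * (1 + T) ^ 6) with hK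
  have hYd : ∀ t > 0, HasDerivAt (fun t => (1 + t) ^ p * S t)
      (p * (1 + t) ^ p / (1 + t) * S t + (1 + t) ^ p * S' t) t := fun t ht =>
    (hPd t ht).mul (hSd t ht)
  have hYc : ContinuousOn (fun t => (1 + t) ^ p * S t) (Icc 0 T) := by
    refine ContinuousOn.mul ?_ (hSc.mono fun x hx => mem_Ici.2 hx.1)
    refine ContinuousOn.rpow_const (by fun_prop) fun x hx => Or.inl ?_
    have := hx.1
    positivity
  have hfin := (convex_Icc (0:ℝ) T).image_sub_le_mul_sub_of_deriv_le hYc (C := ρ * K) ?_ ?_ 0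
    ⟨le_rfl, hT⟩ T ⟨hT, le_rfl⟩ hT
  · have hS0 : S 0 ≤ 6 * E := by
      have hq : ∀ k < 6, Q k 0 ≤ E := fun k hk => (hQB k 0).trans (hE k hk)
      have n0 := hq 0 (by norm_num)
      have n1 := hq 1 (by norm_num)
      have n2 := hq 2 (by norm_num)
      have n3 := hq 3 (by norm_num)
      have n4 := hq 4 (by norm_num)
      have n5 := hq 5 (by norm_num)
      have hcs : ∀ x y : ℝ, x ≤ 1 → 0 ≤ x → 0 ≤ y → x * y ≤ y := fun x y h _ h2 =>
        mul_le_of_le_one_left h2 h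
      have hc1 : c ≤ 1 := by rw [hc]; linarith
      simp only [hS, add_zero, one_pow, mul_one]
      have k1 := hcs c _ hc1 hc0.le (hQ0 1 0)
      have k2 := hcs (c/4) _ (by linarith) (by positivity) (hQ0 2 0)
      have k3 := hcs (c/16) _ (by linarith) (by positivity) (hQ0 3 0)
      have k4 := hcs (c/64) _ (by linarith) (by positivity) (hQ0 4 0)
      have k5 := hcs (c/256) _ (by linarith) (by positivity) (hQ0 5 0)
      linarith
    simp only [add_zero, Real.one_rpow, one_mul, sub_zero] at hfin
    have hY : (1 + T) ^ p * S T ≤ 6 * E + ρ * (K * T) := by linarith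
    have hsT : (0:ℝ) ≤ 1 + T := by linarith
    intro k hk
    refine le_trans ?_ hY
    have : ∀ k < 6, c / 256 * (1 + T) ^ k * Q k T ≤ S T := by
      intro k hk
      exact pick6 c (1 + T) hc0.le (by rw [hc]; linarith) hsT (fun k => Q k T) (fun k => hQ0 k T) k hk
    have h1 := this k hk
    calc _ = (1 + T) ^ p * (c / 256 * (1 + T) ^ k * Q k T) := by ring
      _ ≤ _ := by gcongr
  · rw [interior_Icc]
    exact fun x hx => (hYd x hx.1).differentiableAt.differentiableWithinAt
  · rw [interior_Icc]
    intro t htt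
    rw [(hYd t htt.1).deriv]
    have ht := htt.1
    have htT := htt.2.le
    have := alg_main ε c p (1+t) ρ M (Q 0 t) (Q 1 t) (Q 2 t) (Q 3 t) (Q 4 t) (Q 5 t) (Q 6 t)
      (L 0 t) (L 1 t) (L 2 t) (L 3 t) (L 4 t) (L 5 t) hε hε1 hc hp (by linarith) hρ0.le hM0
      (hQ0 _ _) (hQ0 _ _) (hQ0 _ _) (hQ0 _ _) (hQ0 _ _) (hQ0 _ _) (hQ0 _ _)
      (hLle 0 (by norm_num) t ht htT) (hLle 1 (by norm_num) t ht htT) (hLle 2 (by norm_num) t ht htT)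
      (hLle 3 (by norm_num) t ht htT) (hLle 4 (by norm_num) t ht htT) (hLle 5 (by norm_num) t ht htT)
      (hPo t ht htT)
    have h1 : p * S t + (1 + t) * S' t ≤ ρ * ((48 + 48 / ε) * M * (1 + t) ^ 6) := this
    have h2 : p * (1 + t) ^ p / (1 + t) * S t + (1 + t) ^ p * S' t
        = (1 + t) ^ p / (1 + t) * (p * S t + (1 + t) * S' t) := by field_simp
    rw [h2]
    have h3 : (1 + t) ^ p / (1 + t) ≤ (1 + T) ^ 2 := by
      have : (1 + t) ^ p ≤ (1 + t) ^ (2:ℝ) :=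
        Real.rpow_le_rpow_of_exponent_le (by linarith) (by linarith)
      rw [Real.rpow_two] at this
      rw [div_le_iff₀ (by positivity)]
      have h4 : (1 + t) ^ 2 ≤ (1 + T) ^ 2 := by gcongr
      have h5 : 0 ≤ (1 + T) ^ 2 := by positivity
      nlinarith
    calc _ ≤ (1 + t) ^ p / (1 + t) * (ρ * ((48 + 48 / ε) * M * (1 + t) ^ 6)) := by gcongr
      _ ≤ (1 + T) ^ 2 * (ρ * ((48 + 48 / ε) * M * (1 + T) ^ 6)) := by gcongr
      _ = _ := by rw [hK]; ring

theorem chain_decay {g : ℕ → ℝ → ℝ → ℝ} (hg : Chain g) (ε : ℝ) (hε : 0 < ε) (hε1 : ε < 1)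
    (T M E : ℝ) (hM0 : 0 ≤ M) (hT : 0 ≤ T)
    (hE : ∀ R > 0, ∀ k < 6, QQ R (fun _ => 1) (g k) 0 ≤ E)
    (hM : ∀ R > 0, ∀ t, 0 < t → t ≤ T → ∀ k < 6, QQ R (fun _ => 1) (g k) t ≤ M) :
    ∀ k < 6, ∀ N > 0, ε / 12 / 256 * (1 + T) ^ (3 / 2 - ε) * (1 + T) ^ k * QQ N (fun _ => 1) (g k) T
      ≤ 6 * E := by
  intro k hk N hN
  set K := ((1 + T) ^ 2 * ((48 + 48 / ε) * M * (1 + T) ^ 6) * T) with hK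
  set A := ε / 12 / 256 * (1 + T) ^ (3 / 2 - ε) * (1 + T) ^ k with hA
  have hA0 : 0 ≤ A := by positivity
  have main : ∀ R ≥ N, A * ((1 - (1 / R ^ 2) * N ^ 2) ^ 2 * QQ N (fun _ => 1) (g k) T)
      ≤ 6 * E + (1 / R ^ 2) * K := by
    intro R hRN
    have hR : 0 < R := hN.trans_le hRN
    refine le_trans ?_ (chain_R hg ε hε hε1 R hR T M E hM0 hT (hE R hR) (hM R hR) k hk)
    rw [← hA]
    gcongr
    have := hg.contz k T
    have := cut_cont (1 / R ^ 2)
    simp only [QQ]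
    rw [← intervalIntegral.integral_const_mul]
    have h1 : (∫ z in (0:ℝ)..N, (1 - 1 / R ^ 2 * N ^ 2) ^ 2 * (1 * (Real.exp (sg T * z ^ 2) * g k T z ^ 2)))
      ≤ ∫ z in (0:ℝ)..N, cut (1 / R ^ 2) z * (Real.exp (sg T * z ^ 2) * g k T z ^ 2) := by
      apply intervalIntegral.integral_mono_on hN.le
      · exact Continuous.intervalIntegrable (by fun_prop) _ _
      · exact Continuous.intervalIntegrable (by fun_prop) _ _
      · intro z hz
        rw [one_mul]
        gcongr
        unfold cut
        have h2 : 1 / R ^ 2 * N ^ 2 ≤ 1 := by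
          rw [one_div, inv_mul_le_iff₀ (by positivity), mul_one]; gcongr
        have hz1 := hz.1
        have hz2 := hz.2
        have h3 : 0 ≤ 1 - 1 / R ^ 2 * N ^ 2 := by linarith
        gcongr
    refine h1.trans ?_
    apply intervalIntegral.integral_mono_interval le_rfl hN.le hRN
    · refine Eventually.of_forall fun z => ?_
      simp only [Pi.zero_apply]
      unfold cut
      positivity
    · exact Continuous.intervalIntegrable (by fun_prop) _ _
  have t1 : Tendsto (fun R : ℝ => 1 / R ^ 2) atTop (nhds 0) := by
    simpa using (tendsto_pow_neg_atTop (𝕜 := ℝ) (n := 2) (by norm_num))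
  have t2 : Tendsto (fun R : ℝ => A * ((1 - (1 / R ^ 2) * N ^ 2) ^ 2 * QQ N (fun _ => 1) (g k) T)) atTop
      (nhds (A * ((1 - 0 * N ^ 2) ^ 2 * QQ N (fun _ => 1) (g k) T))) :=
    ((((t1.mul_const _).const_sub 1).pow 2).mul_const _).const_mul A
  have t3 : Tendsto (fun R : ℝ => 6 * E + (1 / R ^ 2) * K) atTop (nhds (6 * E + 0 * K)) :=
    (t1.mul_const _).const_add _
  have := le_of_tendsto_of_tendsto t2 t3 ((eventually_ge_atTop N).mono main)
  simpa using this

lemma pointwise1d (σ r A B : ℝ) (hσ : 0 < σ) (hr : 0 < r)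
    (f f1 : ℝ → ℝ) (cf : Continuous f) (cf1 : Continuous f1)
    (df : ∀ z > 0, HasDerivAt f (f1 z) z)
    (hA : ∀ R > 0, ∫ z in (0:ℝ)..R, Real.exp (σ * z ^ 2) * f z ^ 2 ≤ A)
    (hB : ∀ R > 0, ∫ z in (0:ℝ)..R, Real.exp (σ * z ^ 2) * f1 z ^ 2 ≤ B)
    (z : ℝ) (hz : 0 < z) :
    Real.exp (σ * z ^ 2) * f z ^ 2 ≤ r * A + B / r := by
  have hw : ∀ z : ℝ, HasDerivAt (fun z => Real.exp (σ * z ^ 2))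
      (Real.exp (σ * z ^ 2) * (σ * (2 * z))) z := by
    intro z
    have := ((hasDerivAt_pow 2 z).const_mul σ).exp
    simpa using this
  have main : ∀ R ≥ z, (1 - (1 / R ^ 2) * z ^ 2) ^ 2 * (Real.exp (σ * z ^ 2) * f z ^ 2)
      ≤ 4 * (1 / R) * A + (r * A + B / r) := by
    intro R hRz
    have hR : 0 < R := hz.trans_le hRz
    set ρ := 1 / R ^ 2 with hρ
    have hρ0 : 0 < ρ := by positivity
    have hρR : ρ * R ^ 2 = 1 := by rw [hρ]; field_simp
    have hρR1 : ρ * R = 1 / R := by rw [hρ]; field_simp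
    have hu : ∀ z : ℝ, HasDerivAt (fun z => 1 - ρ * z ^ 2) (-(ρ * (2 * z))) z := by
      intro z
      have := ((hasDerivAt_pow 2 z).const_mul ρ).const_sub 1
      simpa using this
    set Φ : ℝ → ℝ := fun z => -((1 - ρ * z ^ 2) ^ 2 * (Real.exp (σ * z ^ 2) * f z ^ 2)) with hΦ
    have hdΦ : ∀ z > 0, HasDerivAt Φ _ z := fun z hz =>
      (((hu z).fun_pow 2).mul ((hw z).mul ((df z hz).fun_pow 2))).neg
    have key := intervalIntegral.sub_le_integral_of_hasDeriv_right_of_le (a := z) (b := R) hRz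
      (g := Φ) (g' := fun z => deriv Φ z)
      (φ := fun z => (4 * (1 / R) + r) * (Real.exp (σ * z ^ 2) * f z ^ 2)
        + 1 / r * (Real.exp (σ * z ^ 2) * f1 z ^ 2))
      (by rw [hΦ]; fun_prop)
      (fun y hy => (hdΦ y (hz.trans hy.1)).differentiableAt.hasDerivAt.hasDerivWithinAt)
      (Continuous.integrableOn_Icc (by fun_prop)) ?_
    · have eR : Φ R = 0 := by
        have : 1 - ρ * R ^ 2 = 0 := by linarith
        simp only [hΦ, this]; ring
      rw [eR] at key
      have h1 : (∫ z in z..R, (4 * (1 / R) + r) * (Real.exp (σ * z ^ 2) * f z ^ 2)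
        + 1 / r * (Real.exp (σ * z ^ 2) * f1 z ^ 2)) ≤ ∫ z in (0:ℝ)..R, (4 * (1 / R) + r) * (Real.exp (σ * z ^ 2) * f z ^ 2)
        + 1 / r * (Real.exp (σ * z ^ 2) * f1 z ^ 2) := by
        apply intervalIntegral.integral_mono_interval hz.le hRz le_rfl
        · refine Eventually.of_forall fun z => ?_
          simp only [Pi.zero_apply]
          positivity
        · exact Continuous.intervalIntegrable (by fun_prop) _ _
      have hsplit : (∫ z in (0:ℝ)..R, (4 * (1 / R) + r) * (Real.exp (σ * z ^ 2) * f z ^ 2)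
        + 1 / r * (Real.exp (σ * z ^ 2) * f1 z ^ 2))
          = (4 * (1 / R) + r) * (∫ z in (0:ℝ)..R, Real.exp (σ * z ^ 2) * f z ^ 2)
            + 1 / r * ∫ z in (0:ℝ)..R, Real.exp (σ * z ^ 2) * f1 z ^ 2 := by
        rw [intervalIntegral.integral_add, intervalIntegral.integral_const_mul,
          intervalIntegral.integral_const_mul]
        all_goals exact Continuous.intervalIntegrable (by fun_prop) _ _
      have h2 := mul_le_mul_of_nonneg_left (hA R hR) (by positivity : 0 ≤ 4 * (1 / R) + r)
      have h3 := mul_le_mul_of_nonneg_left (hB R hR) (by positivity : 0 ≤ 1 / r)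
      have h4 : 1 / r * B = B / r := by ring
      simp only [hΦ] at key
      linarith
    · intro y hy
      have hy0 : 0 < y := hz.trans hy.1
      rw [(hdΦ y hy0).deriv]
      simp only [Pi.mul_apply]
      have hE := Real.exp_pos (σ * y ^ 2)
      generalize Real.exp (σ * y ^ 2) = W at hE ⊢
      generalize f y = a
      generalize f1 y = b
      have hu1 : ρ * y ^ 2 ≤ 1 := by
        rw [← hρR]; have := hy.2; gcongr
      have hu2 : 0 ≤ ρ * y ^ 2 := by positivity
      have hyR : ρ * y ≤ 1 / R := by rw [← hρR1]; have := hy.2; gcongr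
      have hu0 : 0 ≤ 1 - ρ * y ^ 2 := by linarith
      have hu3 : 1 - ρ * y ^ 2 ≤ 1 := by linarith
      generalize 1 - ρ * y ^ 2 = u at hu0 hu3 ⊢
      have hry : ρ * y * u ≤ 1 / R := by
        have : 0 ≤ ρ * y := by positivity
        nlinarith
      have s1 : ρ * y * u * (W * a ^ 2) ≤ 1 / R * (W * a ^ 2) := by gcongr
      have s2 : 0 ≤ u ^ 2 * (W * (σ * (2 * y)) * a ^ 2) := by positivity
      have s3 : -(2 * a * b) ≤ r * a ^ 2 + 1 / r * b ^ 2 := by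
        have : 0 ≤ (r * a + b) ^ 2 / r := by positivity
        have e : (r * a + b) ^ 2 / r = r * a ^ 2 + 2 * a * b + 1 / r * b ^ 2 := by field_simp; ring
        linarith
      have s4 : 0 ≤ r * a ^ 2 + 1 / r * b ^ 2 := by positivity
      have s5 : u ^ 2 * -(2 * a * b) ≤ r * a ^ 2 + 1 / r * b ^ 2 := by
        have hu4 : u ^ 2 ≤ 1 := by nlinarith
        calc _ ≤ u ^ 2 * (r * a ^ 2 + 1 / r * b ^ 2) := by gcongr
          _ ≤ _ := mul_le_of_le_one_left s4 hu4
      have s6 := mul_le_mul_of_nonneg_left s5 hE.le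
      push_cast
      norm_num
      ring_nf at *
      linarith
  have t0 : Tendsto (fun R : ℝ => 1 / R) atTop (nhds 0) := by
    simpa using (tendsto_inv_atTop_zero (𝕜 := ℝ))
  have t1 : Tendsto (fun R : ℝ => 1 / R ^ 2) atTop (nhds 0) := by
    simpa using (tendsto_pow_neg_atTop (𝕜 := ℝ) (n := 2) (by norm_num))
  have t2 : Tendsto (fun R : ℝ => (1 - (1 / R ^ 2) * z ^ 2) ^ 2 * (Real.exp (σ * z ^ 2) * f z ^ 2)) atTop
      (nhds ((1 - 0 * z ^ 2) ^ 2 * (Real.exp (σ * z ^ 2) * f z ^ 2))) :=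
    ((((t1.mul_const _).const_sub 1).pow 2).mul_const _)
  have t3 : Tendsto (fun R : ℝ => 4 * (1 / R) * A + (r * A + B / r)) atTop
      (nhds (4 * 0 * A + (r * A + B / r))) :=
    ((t0.const_mul 4).mul_const _).add_const _
  have := le_of_tendsto_of_tendsto t2 t3 ((eventually_ge_atTop z).mono main)
  simpa using this

lemma gauss_tail (a b : ℝ) (ha : 0 < a) (hab : a ≤ b) :
    ∫ y in a..b, Real.exp (-(1 / 4 * y ^ 2)) ≤ 2 / a * Real.exp (-(1 / 4 * a ^ 2)) := by
  have hd : ∀ y : ℝ, HasDerivAt (fun y => -(2 / a) * Real.exp (-(1 / 4 * y ^ 2)))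
      (y / a * Real.exp (-(1 / 4 * y ^ 2))) y := by
    intro y
    have := ((((hasDerivAt_pow 2 y).const_mul (1/4)).fun_neg).exp).const_mul (-(2/a))
    refine this.congr_deriv ?_
    push_cast
    field_simp
    norm_num
  have h1 : ∫ y in a..b, y / a * Real.exp (-(1 / 4 * y ^ 2))
      = -(2 / a) * Real.exp (-(1 / 4 * b ^ 2)) - -(2 / a) * Real.exp (-(1 / 4 * a ^ 2)) :=
    intervalIntegral.integral_eq_sub_of_hasDerivAt (fun y _ => hd y)
      (Continuous.intervalIntegrable (by fun_prop) _ _)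
  have h2 : ∫ y in a..b, Real.exp (-(1 / 4 * y ^ 2)) ≤ ∫ y in a..b, y / a * Real.exp (-(1 / 4 * y ^ 2)) := by
    apply intervalIntegral.integral_mono_on hab
    · exact Continuous.intervalIntegrable (by fun_prop) _ _
    · exact Continuous.intervalIntegrable (by fun_prop) _ _
    · intro y hy
      apply le_mul_of_one_le_left (Real.exp_pos _).le
      rw [one_le_div ha]; exact hy.1
  have h3 : 0 ≤ 2 / a * Real.exp (-(1 / 4 * b ^ 2)) := by positivity
  linarith

lemma tail_sq (g : ℝ → ℝ) (cg : Continuous g) (E : ℝ)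
    (hE : ∀ R > 0, ∫ z in (0:ℝ)..R, Real.exp (1 / 4 * z ^ 2) * g z ^ 2 ≤ E)
    (a b : ℝ) (ha : 0 < a) (hab : a ≤ b) :
    a * Real.exp (1 / 4 * a ^ 2) * (∫ y in a..b, g y) ^ 2 ≤ 2 * E := by
  set J := ∫ y in a..b, g y with hJ
  set Q := 2 / a * Real.exp (-(1 / 4 * a ^ 2)) with hQ
  have hall : ∀ r : ℝ, 0 ≤ E * (r * r) + 2 * J * r + Q := by
    intro r
    have h1 : 0 ≤ ∫ y in a..b, (r ^ 2 * (Real.exp (1 / 4 * y ^ 2) * g y ^ 2) + 2 * r * g y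
        + Real.exp (-(1 / 4 * y ^ 2))) := by
      apply intervalIntegral.integral_nonneg hab
      intro y _
      have e1 : Real.exp (1 / 4 * y ^ 2) * Real.exp (-(1 / 4 * y ^ 2)) = 1 := by
        rw [← Real.exp_add]; simp
      have e2 : 0 ≤ Real.exp (1 / 4 * y ^ 2) * (r * g y + Real.exp (-(1 / 4 * y ^ 2))) ^ 2 := by positivity
      refine e2.trans_eq ?_
      linear_combination (2 * r * g y + Real.exp (-(1 / 4 * y ^ 2))) * e1
    rw [intervalIntegral.integral_add, intervalIntegral.integral_add,
      intervalIntegral.integral_const_mul, intervalIntegral.integral_const_mul] at h1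
    · have h2 : ∫ y in a..b, Real.exp (1 / 4 * y ^ 2) * g y ^ 2 ≤ E := by
        refine le_trans ?_ (hE b (ha.trans_le hab))
        apply intervalIntegral.integral_mono_interval ha.le hab le_rfl
        · refine Eventually.of_forall fun z => ?_
          simp only [Pi.zero_apply]
          positivity
        · exact Continuous.intervalIntegrable (by fun_prop) _ _
      have h3 := gauss_tail a b ha hab
      have h4 := mul_le_mul_of_nonneg_left h2 (sq_nonneg r)
      rw [← hQ] at h3
      rw [← hJ] at h1
      nlinarith
    all_goals exact Continuous.intervalIntegrable (by fun_prop) _ _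
  have hd := discrim_le_zero hall
  rw [discrim] at hd
  have h1 : J ^ 2 ≤ E * Q := by linarith
  have e1 : Real.exp (1 / 4 * a ^ 2) * Real.exp (-(1 / 4 * a ^ 2)) = 1 := by
    rw [← Real.exp_add]; simp
  calc _ ≤ a * Real.exp (1 / 4 * a ^ 2) * (E * Q) := by gcongr
    _ = 2 * E * (Real.exp (1 / 4 * a ^ 2) * Real.exp (-(1 / 4 * a ^ 2))) := by
      rw [hQ]; field_simp
    _ = 2 * E := by rw [e1, mul_one]

lemma wint (g : ℝ → ℝ) (cg : Continuous g) (E : ℝ)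
    (hE : ∀ R > 0, ∫ z in (0:ℝ)..R, Real.exp (1 / 4 * z ^ 2) * g z ^ 2 ≤ E) :
    IntegrableOn (fun z => Real.exp (1 / 4 * z ^ 2) * g z ^ 2) (Ioi 0) := by
  refine integrableOn_Ioi_of_intervalIntegral_norm_bounded (l := atTop) (b := fun x : ℝ => x) E 0 ?_ tendsto_id ?_
  · intro R
    exact (Continuous.integrableOn_Icc (a := 0) (b := R) (by fun_prop)).mono_set Ioc_subset_Icc_self
  · filter_upwards [eventually_gt_atTop 0] with R hR
    refine le_trans (le_of_eq ?_) (hE R hR)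
    congr 1
    funext z
    rw [Real.norm_of_nonneg (by positivity)]

lemma gint (g : ℝ → ℝ) (cg : Continuous g) (E : ℝ)
    (hE : ∀ R > 0, ∫ z in (0:ℝ)..R, Real.exp (1 / 4 * z ^ 2) * g z ^ 2 ≤ E) :
    IntegrableOn g (Ioi 0) ∧ IntegrableOn (fun z => z * g z) (Ioi 0) := by
  have h1 := wint g cg E hE
  have h2 : IntegrableOn (fun z : ℝ => Real.exp (-(1/8) * z ^ 2)) (Ioi 0) :=
    (integrable_exp_neg_mul_sq (by norm_num)).integrableOn
  have e1 : ∀ z : ℝ, Real.exp (1 / 4 * z ^ 2) * Real.exp (-(1 / 4 * z ^ 2)) = 1 := by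
    intro z; rw [← Real.exp_add]; simp
  have e2 : ∀ z : ℝ, Real.exp (-(1 / 4 * z ^ 2)) ≤ Real.exp (-(1/8) * z ^ 2) := by
    intro z; apply Real.exp_le_exp.2; nlinarith [sq_nonneg z]
  have e3 : ∀ z : ℝ, z ^ 2 * Real.exp (-(1 / 4 * z ^ 2)) ≤ 8 * Real.exp (-(1/8) * z ^ 2) := by
    intro z
    have h3 : 1 / 8 * z ^ 2 ≤ Real.exp (1 / 8 * z ^ 2) := by
      linarith [Real.add_one_le_exp (1 / 8 * z ^ 2)]
    have h4 : Real.exp (-(1/8) * z ^ 2) = Real.exp (1 / 8 * z ^ 2) * Real.exp (-(1 / 4 * z ^ 2)) := by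
      rw [← Real.exp_add]; congr 1; ring
    rw [h4]
    have := Real.exp_pos (-(1 / 4 * z ^ 2))
    nlinarith
  have e4 : ∀ z x : ℝ, |x * g z| ≤ Real.exp (1 / 4 * z ^ 2) * g z ^ 2 + x ^ 2 * Real.exp (-(1 / 4 * z ^ 2)) := by
    intro z x
    have h5 : ∀ y : ℝ, y * y = (x * g z) ^ 2 →
        y ≤ Real.exp (1 / 4 * z ^ 2) * g z ^ 2 + x ^ 2 * Real.exp (-(1 / 4 * z ^ 2)) := by
      intro y hy
      have p1 := Real.exp_pos (1 / 4 * z ^ 2)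
      have p2 := Real.exp_pos (-(1 / 4 * z ^ 2))
      refine (le_abs_self y).trans (abs_le_of_sq_le_sq ?_ (by positivity))
      have := e1 z
      set a := Real.exp (1 / 4 * z ^ 2) * g z ^ 2
      set b := x ^ 2 * Real.exp (-(1 / 4 * z ^ 2))
      have hab : a * b = (x * g z) ^ 2 := by
        simp only [a, b]; linear_combination (g z ^ 2 * x ^ 2) * this
      have ha : 0 ≤ a := by positivity
      have hb : 0 ≤ b := by positivity
      nlinarith [mul_nonneg ha hb]
    exact h5 _ (by rw [abs_mul_abs_self]; ring)
  constructor
  · refine (h1.add h2).mono' cg.aestronglyMeasurable.restrict (Eventually.of_forall fun z => ?_)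
    have := e4 z 1
    simp only [one_mul, one_pow] at this
    rw [Real.norm_eq_abs]
    exact this.trans (by simp only [Pi.add_apply]; exact add_le_add le_rfl (e2 z))
  · refine (h1.add (h2.const_mul 8)).mono' (by fun_prop) (Eventually.of_forall fun z => ?_)
    have := e4 z z
    rw [Real.norm_eq_abs]
    exact this.trans (by simp only [Pi.add_apply]; exact add_le_add le_rfl (e3 z))

/-- Hardy-type inequality for the antiderivative vanishing at infinity. -/
lemma hardy (g : ℝ → ℝ) (cg : Continuous g) (E : ℝ)
    (hE : ∀ R > 0, ∫ z in (0:ℝ)..R, Real.exp (1 / 4 * z ^ 2) * g z ^ 2 ≤ E)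
    (G : ℝ → ℝ) (hG : ∀ z, G z = (∫ y in (0:ℝ)..z, g y) - ∫ y in Ioi (0:ℝ), g y) :
    (∀ R > 0, R * Real.exp (1 / 4 * R ^ 2) * G R ^ 2 ≤ 2 * E) ∧
    (∀ R > 0, ∫ z in (0:ℝ)..R, Real.exp (1 / 4 * z ^ 2) * G z ^ 2 ≤ 4 * E) := by
  have hint := (gint g cg E hE).1
  have hlim := intervalIntegral_tendsto_integral_Ioi (l := atTop) (b := fun x : ℝ => x) 0 hint tendsto_id
  have hdG : ∀ z, HasDerivAt G (g z) z := by
    intro z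
    have h1 : HasDerivAt (fun z => (∫ y in (0:ℝ)..z, g y) - ∫ y in Ioi (0:ℝ), g y) (g z) z :=
      (cg.integral_hasStrictDerivAt 0 z).hasDerivAt.sub_const _
    exact h1.congr_of_eventuallyEq (Eventually.of_forall hG)
  have cG : Continuous G := continuous_iff_continuousAt.2 fun z => (hdG z).continuousAt
  have first : ∀ R > 0, R * Real.exp (1 / 4 * R ^ 2) * G R ^ 2 ≤ 2 * E := by
    intro R hR
    have h1 : Tendsto (fun b : ℝ => R * Real.exp (1 / 4 * R ^ 2) * (∫ y in R..b, g y) ^ 2) atTop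
        (nhds (R * Real.exp (1 / 4 * R ^ 2) * ((∫ y in Ioi (0:ℝ), g y) - ∫ y in (0:ℝ)..R, g y) ^ 2)) := by
      refine Tendsto.const_mul _ (Tendsto.pow ?_ 2)
      refine (hlim.sub_const (∫ y in (0:ℝ)..R, g y)).congr fun b => ?_
      exact intervalIntegral.integral_interval_sub_left (cg.intervalIntegrable _ _) (cg.intervalIntegrable _ _)
    have h2 := le_of_tendsto h1 ((eventually_ge_atTop R).mono fun b hb => tail_sq g cg E hE R b hR hb)
    rw [hG R]
    refine le_trans (le_of_eq ?_) h2
    ring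
  refine ⟨first, fun R hR => ?_⟩
  have hw : ∀ z : ℝ, HasDerivAt (fun z => Real.exp (1 / 4 * z ^ 2))
      (Real.exp (1 / 4 * z ^ 2) * (1 / 4 * (2 * z))) z := by
    intro z
    have := ((hasDerivAt_pow 2 z).const_mul (1/4)).exp
    simpa using this
  set Φ : ℝ → ℝ := fun z => -(1 / 2) * z * (Real.exp (1 / 4 * z ^ 2) * (G z * G z)) with hΦ
  have hdΦ : ∀ z, HasDerivAt Φ _ z := fun z =>
    ((hasDerivAt_id z).const_mul (-(1 / 2))).mul ((hw z).mul ((hdG z).mul (hdG z)))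
  have key := intervalIntegral.sub_le_integral_of_hasDeriv_right_of_le (a := 0) (b := R) hR.le
    (g := Φ) (g' := fun z => deriv Φ z)
    (φ := fun z => Real.exp (1 / 4 * z ^ 2) * g z ^ 2 - 1 / 2 * (Real.exp (1 / 4 * z ^ 2) * G z ^ 2))
    (by rw [hΦ]; fun_prop)
    (fun y hy => (hdΦ y).differentiableAt.hasDerivAt.hasDerivWithinAt)
    (Continuous.integrableOn_Icc (by fun_prop)) ?_
  · rw [intervalIntegral.integral_sub, intervalIntegral.integral_const_mul] at key
    · have h1 := hE R hR
      have h2 := first R hR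
      simp only [hΦ] at key
      have h3 : R * Real.exp (1 / 4 * R ^ 2) * G R ^ 2 = R * (Real.exp (1 / 4 * R ^ 2) * (G R * G R)) := by ring
      rw [h3] at h2
      linarith
    all_goals exact Continuous.intervalIntegrable (by fun_prop) _ _
  · intro z hz
    rw [(hdΦ z).deriv]
    have : 0 ≤ Real.exp (1 / 4 * z ^ 2) * (g z + z / 2 * G z) ^ 2 := by positivity
    simp only [id, Pi.mul_apply]
    nlinarith [this]

/-- Double antiderivative of the initial datum. -/
lemma double_anti (h₀ : ℝ → ℝ) (ch : Continuous h₀) (E : ℝ)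
    (hE : ∀ R > 0, ∫ z in (0:ℝ)..R, Real.exp (1 / 4 * z ^ 2) * h₀ z ^ 2 ≤ E)
    (hm : ∫ z in Ioi (0:ℝ), z * h₀ z = 0) :
    ∃ F G : ℝ → ℝ, (∀ z, HasDerivAt F (G z) z) ∧ (∀ z, HasDerivAt G (h₀ z) z) ∧ F 0 = 0 ∧
      (∀ R > 0, ∫ z in (0:ℝ)..R, Real.exp (1 / 4 * z ^ 2) * G z ^ 2 ≤ 4 * E) ∧
      (∀ R > 0, ∫ z in (0:ℝ)..R, Real.exp (1 / 4 * z ^ 2) * F z ^ 2 ≤ 16 * E) := by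
  set G : ℝ → ℝ := fun z => (∫ y in (0:ℝ)..z, h₀ y) - ∫ y in Ioi (0:ℝ), h₀ y with hG
  have hdG : ∀ z, HasDerivAt G (h₀ z) z := fun z =>
    (ch.integral_hasStrictDerivAt 0 z).hasDerivAt.sub_const _
  have cG : Continuous G := continuous_iff_continuousAt.2 fun z => (hdG z).continuousAt
  obtain ⟨G1, G2⟩ := hardy h₀ ch E hE G (fun z => rfl)
  have hint := gint h₀ ch E hE
  have hintG := gint G cG (4 * E) G2
  have hlim1 := intervalIntegral_tendsto_integral_Ioi (l := atTop) (b := fun x : ℝ => x) 0 hint.2 tendsto_id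
  have hlim2 := intervalIntegral_tendsto_integral_Ioi (l := atTop) (b := fun x : ℝ => x) 0 hintG.1 tendsto_id
  have hparts : ∀ R, (∫ y in (0:ℝ)..R, y * h₀ y) = R * G R - ∫ y in (0:ℝ)..R, G y := by
    intro R
    have h1 : ∫ y in (0:ℝ)..R, (1 * G y + y * h₀ y) = R * G R - 0 * G 0 :=
      intervalIntegral.integral_eq_sub_of_hasDerivAt
        (fun y _ => (hasDerivAt_id y).mul (hdG y))
        (Continuous.intervalIntegrable (by fun_prop) _ _)
    rw [intervalIntegral.integral_add] at h1
    · simp only [one_mul, zero_mul, sub_zero] at h1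
      linarith
    all_goals exact Continuous.intervalIntegrable (by fun_prop) _ _
  have hE0 : 0 ≤ E := le_trans (intervalIntegral.integral_nonneg zero_le_one fun z _ => by positivity)
    (hE 1 one_pos)
  have hRG : Tendsto (fun R => R * G R) atTop (nhds 0) := by
    have h1 : Tendsto (fun R : ℝ => 8 * E * R⁻¹) atTop (nhds 0) := by
      simpa using (tendsto_inv_atTop_zero (𝕜 := ℝ)).const_mul (8 * E)
    have h2 : Tendsto (fun R => (R * G R) ^ 2) atTop (nhds 0) := by
      refine tendsto_of_tendsto_of_tendsto_of_le_of_le' tendsto_const_nhds h1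
        (Eventually.of_forall fun R => sq_nonneg _) ?_
      filter_upwards [eventually_gt_atTop 0] with R hR
      have h3 := G1 R hR
      have h4 : 1 / 4 * R ^ 2 ≤ Real.exp (1 / 4 * R ^ 2) := by
        linarith [Real.add_one_le_exp (1 / 4 * R ^ 2)]
      have h5 : R * (1 / 4 * R ^ 2) * G R ^ 2 ≤ 2 * E := le_trans (by gcongr) h3
      rw [← div_eq_mul_inv, le_div_iff₀ hR]
      nlinarith
    have h3 := h2.sqrt
    simp only [Real.sqrt_sq_eq_abs, Real.sqrt_zero] at h3
    exact (tendsto_zero_iff_abs_tendsto_zero _).2 h3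
  have hI : ∫ y in Ioi (0:ℝ), G y = 0 := by
    have h1 : Tendsto (fun R => ∫ y in (0:ℝ)..R, G y) atTop (nhds (0 - 0)) := by
      rw [hm] at hlim1
      refine (hRG.sub hlim1).congr fun R => ?_
      rw [hparts]; ring
    rw [sub_zero] at h1
    exact tendsto_nhds_unique hlim2 h1
  refine ⟨fun z => ∫ y in (0:ℝ)..z, G y, G, fun z => (cG.integral_hasStrictDerivAt 0 z).hasDerivAt,
    hdG, by simp, G2, ?_⟩
  have := (hardy G cG (4 * E) G2 (fun z => ∫ y in (0:ℝ)..z, G y) (fun z => by rw [hI]; simp)).2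
  intro R hR
  linarith [this R hR]

lemma sm_dz (u : ℝ → ℝ → ℝ) (hu : ContDiff ℝ (⊤ : ℕ∞) fun p : ℝ × ℝ => u p.1 p.2) (t z : ℝ) :
    HasDerivAt (u t) (fderiv ℝ (fun p : ℝ × ℝ => u p.1 p.2) (t, z) (0, 1)) z := by
  have h1 : HasFDerivAt (fun p : ℝ × ℝ => u p.1 p.2) (fderiv ℝ (fun p : ℝ × ℝ => u p.1 p.2) (t, z)) (t, z) :=
    (hu.differentiable (by simp)).differentiableAt.hasFDerivAt
  have h2 : HasDerivAt (fun y : ℝ => (t, y)) ((0 : ℝ), (1 : ℝ)) z :=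
    (hasDerivAt_const z t).prodMk (hasDerivAt_id z)
  exact h1.comp_hasDerivAt z h2

lemma sm_dt (u : ℝ → ℝ → ℝ) (hu : ContDiff ℝ (⊤ : ℕ∞) fun p : ℝ × ℝ => u p.1 p.2) (t z : ℝ) :
    HasDerivAt (fun s => u s z) (fderiv ℝ (fun p : ℝ × ℝ => u p.1 p.2) (t, z) (1, 0)) t := by
  have h1 : HasFDerivAt (fun p : ℝ × ℝ => u p.1 p.2) (fderiv ℝ (fun p : ℝ × ℝ => u p.1 p.2) (t, z)) (t, z) :=
    (hu.differentiable (by simp)).differentiableAt.hasFDerivAt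
  have h2 : HasDerivAt (fun y : ℝ => (y, z)) ((1 : ℝ), (0 : ℝ)) t :=
    (hasDerivAt_id t).prodMk (hasDerivAt_const t z)
  exact h1.comp_hasDerivAt t h2

lemma sm_fd (u : ℝ → ℝ → ℝ) (hu : ContDiff ℝ (⊤ : ℕ∞) fun p : ℝ × ℝ => u p.1 p.2) (v : ℝ × ℝ) :
    ContDiff ℝ (⊤ : ℕ∞) fun p : ℝ × ℝ => fderiv ℝ (fun p : ℝ × ℝ => u p.1 p.2) p v :=
  (hu.fderiv_right (m := ((⊤ : ℕ∞) : WithTop ℕ∞)) (by simp)).clm_apply contDiff_const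

lemma sm_z (u : ℝ → ℝ → ℝ) (hu : ContDiff ℝ (⊤ : ℕ∞) fun p : ℝ × ℝ => u p.1 p.2) :
    ContDiff ℝ (⊤ : ℕ∞) fun p : ℝ × ℝ => deriv (u p.1) p.2 := by
  have e : (fun p : ℝ × ℝ => deriv (u p.1) p.2) = fun p : ℝ × ℝ =>
      fderiv ℝ (fun p : ℝ × ℝ => u p.1 p.2) p (0, 1) :=
    funext fun p => (sm_dz u hu p.1 p.2).deriv
  rw [e]
  exact sm_fd u hu (0, 1)

lemma sm_t (u : ℝ → ℝ → ℝ) (hu : ContDiff ℝ (⊤ : ℕ∞) fun p : ℝ × ℝ => u p.1 p.2) :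
    ContDiff ℝ (⊤ : ℕ∞) fun p : ℝ × ℝ => deriv (fun s => u s p.2) p.1 := by
  have e : (fun p : ℝ × ℝ => deriv (fun s => u s p.2) p.1) = fun p : ℝ × ℝ =>
      fderiv ℝ (fun p : ℝ × ℝ => u p.1 p.2) p (1, 0) :=
    funext fun p => (sm_dt u hu p.1 p.2).deriv
  rw [e]
  exact sm_fd u hu (1, 0)

lemma sm_symm (u : ℝ → ℝ → ℝ) (hu : ContDiff ℝ (⊤ : ℕ∞) fun p : ℝ × ℝ => u p.1 p.2) (t z : ℝ) :
    deriv (fun s => deriv (u s) z) t = deriv (fun y => deriv (fun s => u s y) t) z := by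
  set U := fun p : ℝ × ℝ => u p.1 p.2 with hU
  have h1 : IsSymmSndFDerivAt ℝ U (t, z) := by
    apply hu.contDiffAt.isSymmSndFDerivAt
    simp only [minSmoothness_of_isRCLikeNormedField]
    exact WithTop.coe_le_coe.2 (le_top : (2 : ℕ∞) ≤ ⊤)
  have h2 : Differentiable ℝ (fderiv ℝ U) :=
    (hu.fderiv_right (m := ((⊤ : ℕ∞) : WithTop ℕ∞)) (by simp)).differentiable (by simp)
  have h3 : HasDerivAt (fun s => deriv (u s) z) (fderiv ℝ (fderiv ℝ U) (t, z) (1, 0) (0, 1)) t := by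
    have a1 : HasDerivAt (fun y : ℝ => (y, z)) ((1 : ℝ), (0 : ℝ)) t :=
      (hasDerivAt_id t).prodMk (hasDerivAt_const t z)
    have a2 := (h2 (t, z)).hasFDerivAt.comp_hasDerivAt t a1
    have a3 := a2.clm_apply (hasDerivAt_const t ((0 : ℝ), (1 : ℝ)))
    simp only [map_zero, add_zero] at a3
    refine a3.congr_of_eventuallyEq (Eventually.of_forall fun s => ?_)
    exact (sm_dz u hu s z).deriv
  have h4 : HasDerivAt (fun y => deriv (fun s => u s y) t) (fderiv ℝ (fderiv ℝ U) (t, z) (0, 1) (1, 0)) z := by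
    have a1 : HasDerivAt (fun y : ℝ => (t, y)) ((0 : ℝ), (1 : ℝ)) z :=
      (hasDerivAt_const z t).prodMk (hasDerivAt_id z)
    have a2 := (h2 (t, z)).hasFDerivAt.comp_hasDerivAt z a1
    have a3 := a2.clm_apply (hasDerivAt_const z ((1 : ℝ), (0 : ℝ)))
    simp only [map_zero, add_zero] at a3
    refine a3.congr_of_eventuallyEq (Eventually.of_forall fun s => ?_)
    exact (sm_dt u hu t s).deriv
  rw [h3.deriv, h4.deriv]
  exact h1.eq _ _

lemma sm_iter (h : ℝ → ℝ → ℝ) (hh : ContDiff ℝ (⊤ : ℕ∞) fun p : ℝ × ℝ => h p.1 p.2) (j : ℕ) :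
    ContDiff ℝ (⊤ : ℕ∞) fun p : ℝ × ℝ => (deriv^[j] (h p.1)) p.2 := by
  induction j with
  | zero => exact hh
  | succ j ih =>
    simp only [Function.iterate_succ_apply']
    exact sm_z (fun t => deriv^[j] (h t)) ih

lemma evo (h : ℝ → ℝ → ℝ) (hh : ContDiff ℝ (⊤ : ℕ∞) fun p : ℝ × ℝ => h p.1 p.2)
    (heq : ∀ t ≥ (0 : ℝ), ∀ z ≥ (0 : ℝ), deriv (fun s => h s z) t = deriv (deriv (h t)) z) (j : ℕ) :
    ∀ t ≥ (0 : ℝ), ∀ z ≥ (0 : ℝ), deriv (fun s => (deriv^[j] (h s)) z) t = (deriv^[j+2] (h t)) z := by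
  induction j with
  | zero => exact heq
  | succ j ih =>
    intro t ht
    have hpos : ∀ z > (0 : ℝ), deriv (fun s => (deriv^[j+1] (h s)) z) t = (deriv^[j+1+2] (h t)) z := by
      intro z hz
      have e1 : (fun s => (deriv^[j+1] (h s)) z) = fun s => deriv ((fun s => deriv^[j] (h s)) s) z := by
        funext s; rw [Function.iterate_succ_apply']
      rw [e1, sm_symm (fun s => deriv^[j] (h s)) (sm_iter h hh j) t z,
        show j + 1 + 2 = (j + 2) + 1 from rfl, Function.iterate_succ_apply']
      apply Filter.EventuallyEq.deriv_eq
      filter_upwards [lt_mem_nhds hz] with y hy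
      exact ih t ht y hy.le
    have c1 : Continuous fun z => deriv (fun s => (deriv^[j+1] (h s)) z) t :=
      (sm_t (fun s => deriv^[j+1] (h s)) (sm_iter h hh (j+1))).continuous.comp
        (Continuous.prodMk_right t)
    have c2 : Continuous fun z => (deriv^[j+1+2] (h t)) z :=
      (sm_iter h hh (j+1+2)).continuous.comp (Continuous.prodMk_right t)
    intro z hz
    have hs : closure (Ioi (0:ℝ)) ⊆ {z | deriv (fun s => (deriv^[j+1] (h s)) z) t = (deriv^[j+1+2] (h t)) z} :=
      (isClosed_eq c1 c2).closure_subset_iff.2 fun z hz => hpos z hz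
    rw [closure_Ioi] at hs
    exact hs hz

lemma bdry (h : ℝ → ℝ → ℝ) (hh : ContDiff ℝ (⊤ : ℕ∞) fun p : ℝ × ℝ => h p.1 p.2)
    (heq : ∀ t ≥ (0 : ℝ), ∀ z ≥ (0 : ℝ), deriv (fun s => h s z) t = deriv (deriv (h t)) z)
    (h0 : ∀ t ≥ (0 : ℝ), h t 0 = 0) (j : ℕ) :
    ∀ t > (0 : ℝ), (deriv^[2 * j] (h t)) 0 = 0 := by
  induction j with
  | zero => intro t ht; exact h0 t ht.le
  | succ j ih =>
    intro t ht
    have e := evo h hh heq (2 * j) t ht.le 0 le_rfl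
    rw [show 2 * (j + 1) = 2 * j + 2 by ring, ← e]
    have : (fun s => (deriv^[2 * j] (h s)) 0) =ᶠ[nhds t] fun _ => (0:ℝ) := by
      filter_upwards [lt_mem_nhds ht] with s hs using ih s hs
    rw [this.deriv_eq]; simp

/-- z-derivative of a time integral. -/
lemma int_dz (u u1 : ℝ → ℝ → ℝ) (cu : Continuous fun p : ℝ × ℝ => u p.1 p.2)
    (cu1 : Continuous fun p : ℝ × ℝ => u1 p.1 p.2)
    (hd : ∀ t z, HasDerivAt (u t) (u1 t z) z) (t z : ℝ) :
    HasDerivAt (fun y => ∫ τ in (0:ℝ)..t, u τ y) (∫ τ in (0:ℝ)..t, u1 τ z) z := by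
  obtain ⟨B, hB⟩ := (isCompact_uIcc (a := (0:ℝ)) (b := t)).prod (isCompact_closedBall z 1)
    |>.exists_bound_of_continuousOn cu1.continuousOn
  have cz : ∀ y, Continuous fun τ => u τ y := fun y => cu.comp (Continuous.prodMk_left y)
  have cz1 : ∀ y, Continuous fun τ => u1 τ y := fun y => cu1.comp (Continuous.prodMk_left y)
  refine (intervalIntegral.hasDerivAt_integral_of_dominated_loc_of_deriv_le (μ := volume)
    (F := fun y τ => u τ y) (F' := fun y τ => u1 τ y) (bound := fun _ => B) (x₀ := z)
    (Metric.ball_mem_nhds z one_pos) ?_ ?_ ?_ ?_ ?_ ?_).2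
  · exact Eventually.of_forall fun y => (cz y).aestronglyMeasurable.restrict
  · exact (cz z).intervalIntegrable _ _
  · exact (cz1 z).aestronglyMeasurable.restrict
  · refine Eventually.of_forall fun τ hτ y hy => ?_
    exact hB (τ, y) ⟨uIoc_subset_uIcc hτ, Metric.ball_subset_closedBall hy⟩
  · exact intervalIntegrable_const
  · exact Eventually.of_forall fun τ hτ y hy => hd τ y

/-- The chain of antiderivatives and derivatives. -/
def gch (h : ℝ → ℝ → ℝ) (F G : ℝ → ℝ) : ℕ → ℝ → ℝ → ℝ
  | 0 => fun t z => F z + ∫ τ in (0:ℝ)..t, h τ z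
  | 1 => fun t z => G z + ∫ τ in (0:ℝ)..t, deriv (h τ) z
  | k + 2 => fun t z => (deriv^[k] (h t)) z

lemma int_cont (u : ℝ → ℝ → ℝ) (cu : Continuous fun p : ℝ × ℝ => u p.1 p.2) :
    Continuous fun p : ℝ × ℝ => ∫ τ in (0:ℝ)..p.1, u τ p.2 := by
  have := intervalIntegral.continuous_parametric_intervalIntegral_of_continuous (μ := volume)
    (f := fun (p : ℝ × ℝ) τ => u τ p.2) (a₀ := 0) (s := fun p : ℝ × ℝ => p.1)
    (by exact cu.comp (continuous_snd.prodMk (continuous_snd.comp continuous_fst))) continuous_fst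
  exact this

lemma gch_chain (h : ℝ → ℝ → ℝ) (F G h₀ : ℝ → ℝ) (hh : ContDiff ℝ (⊤ : ℕ∞) fun p : ℝ × ℝ => h p.1 p.2)
    (heq : ∀ t ≥ (0 : ℝ), ∀ z ≥ (0 : ℝ), deriv (fun s => h s z) t = deriv (deriv (h t)) z)
    (h0 : ∀ t ≥ (0 : ℝ), h t 0 = 0) (hi : ∀ z : ℝ, h 0 z = h₀ z)
    (hF : ∀ z, HasDerivAt F (G z) z) (hG : ∀ z, HasDerivAt G (h₀ z) z) (hF0 : F 0 = 0) :
    Chain (gch h F G) := by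
  have cF : Continuous F := continuous_iff_continuousAt.2 fun z => (hF z).continuousAt
  have cG : Continuous G := continuous_iff_continuousAt.2 fun z => (hG z).continuousAt
  have cD : ∀ j, Continuous fun p : ℝ × ℝ => (deriv^[j] (h p.1)) p.2 := fun j => (sm_iter h hh j).continuous
  have dD : ∀ j t z, HasDerivAt (deriv^[j] (h t)) ((deriv^[j+1] (h t)) z) z := by
    intro j t z
    rw [Function.iterate_succ_apply']
    exact (sm_dz (fun t => deriv^[j] (h t)) (sm_iter h hh j) t z).differentiableAt.hasDerivAt
  have tD : ∀ j, ∀ t ≥ 0, ∀ z ≥ 0, HasDerivAt (fun s => (deriv^[j] (h s)) z) ((deriv^[j+2] (h t)) z) t := by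
    intro j t ht z hz
    rw [← evo h hh heq j t ht z hz]
    exact (sm_dt (fun t => deriv^[j] (h t)) (sm_iter h hh j) t z).differentiableAt.hasDerivAt
  have g0z : ∀ t z, HasDerivAt (gch h F G 0 t) (gch h F G 1 t z) z := fun t z =>
    (hF z).add (int_dz h (fun t => deriv (h t)) (cD 0) (cD 1) (dD 0) t z)
  have hb0 : ∀ t > 0, gch h F G 0 t 0 = 0 := by
    intro t ht
    simp only [gch, hF0, zero_add]
    rw [intervalIntegral.integral_congr (g := fun _ => (0:ℝ))]
    · simp
    · intro τ hτ
      rw [uIcc_of_le ht.le] at hτ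
      exact h0 τ hτ.1
  have hev : ∀ j, ∀ t > 0, gch h F G (2 * j) t 0 = 0 := by
    intro j t ht
    cases j with
    | zero => exact hb0 t ht
    | succ j => exact bdry h hh heq h0 j t ht
  constructor
  · intro k
    match k with
    | 0 => exact (cF.comp continuous_snd).add (int_cont h (cD 0))
    | 1 => exact (cG.comp continuous_snd).add (int_cont (fun t => deriv (h t)) (cD 1))
    | k + 2 => exact cD k
  · intro k t ht z hz
    match k with
    | 0 => exact g0z t z
    | 1 =>
      have h1 := (hG z).add (int_dz (fun t => deriv (h t)) (fun t => deriv (deriv (h t))) (cD 1) (cD 2) (dD 1) t z)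
      have h2 : ∫ τ in (0:ℝ)..t, deriv (deriv (h τ)) z = h t z - h 0 z := by
        refine intervalIntegral.integral_eq_sub_of_hasDerivAt (f := fun τ => h τ z) ?_
          (((cD 2).comp (Continuous.prodMk_left z)).intervalIntegrable _ _)
        intro τ hτ
        rw [uIcc_of_le ht.le] at hτ
        exact tD 0 τ hτ.1 z hz.le
      rw [h2, hi z, add_sub_cancel] at h1
      exact h1
    | k + 2 => exact dD k t z
  · intro t ht
    exact g0z t 0
  · intro k t ht z hz
    match k with
    | 0 =>
      have : Continuous fun τ => h τ z := (cD 0).comp (Continuous.prodMk_left z)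
      exact ((this.integral_hasStrictDerivAt 0 t).hasDerivAt).const_add (F z)
    | 1 =>
      have : Continuous fun τ => deriv (h τ) z := (cD 1).comp (Continuous.prodMk_left z)
      exact ((this.integral_hasStrictDerivAt 0 t).hasDerivAt).const_add (G z)
    | k + 2 => exact tD k t ht.le z hz.le
  · intro k t ht
    rcases Nat.even_or_odd' k with ⟨j, rfl | rfl⟩
    · rw [hev j t ht, zero_mul]
    · rw [show 2 * j + 1 + 1 = 2 * (j + 1) by ring, hev (j+1) t ht, mul_zero]
  · exact hb0

lemma l2_bd (t M R : ℝ) (hM : 0 ≤ M) (hR : 0 < R) (f : ℝ → ℝ) (cf : Continuous f)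
    (hb : L2muSq 1 t f ≤ ENNReal.ofReal M) :
    ∫ z in (0:ℝ)..R, Real.exp (sg t * z ^ 2) * f z ^ 2 ≤ M := by
  have e : ∀ z, mu 1 t z = Real.exp (sg t * z ^ 2) := by
    intro z; rw [mu, sg]; congr 1; ring
  have c : Continuous fun z => Real.exp (sg t * z ^ 2) * f z ^ 2 := by fun_prop
  rw [intervalIntegral.integral_of_le hR.le]
  rw [← ENNReal.ofReal_le_ofReal_iff hM]
  rw [ofReal_integral_eq_lintegral_ofReal ((c.integrableOn_Icc (a := 0) (b := R)).mono_set Ioc_subset_Icc_self)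
    (Eventually.of_forall fun z => by simp only [Pi.zero_apply]; positivity)]
  refine le_trans ?_ hb
  rw [L2muSq]
  simp only [e]
  exact lintegral_mono_set Ioc_subset_Ioi_self

lemma h_bd (t M R : ℝ) (hM : 0 ≤ M) (hR : 0 < R) (f : ℝ → ℝ) (i : ℕ) (hi : i < 4) (cf : Continuous (deriv^[i] f))
    (hb : HmuSq 3 1 t f ≤ ENNReal.ofReal M) :
    ∫ z in (0:ℝ)..R, Real.exp (sg t * z ^ 2) * (deriv^[i] f) z ^ 2 ≤ M := by
  apply l2_bd t M R hM hR _ cf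
  refine le_trans ?_ hb
  rw [HmuSq]
  exact Finset.single_le_sum (f := fun i => L2muSq 1 t (deriv^[i] f)) (fun _ _ => zero_le)
    (Finset.mem_range.2 hi)

lemma main_QQ (ε : ℝ) (hε : 0 < ε) (hε1 : ε < 1) (h : ℝ → ℝ → ℝ) (h₀ : ℝ → ℝ)
    (hh : ContDiff ℝ (⊤ : ℕ∞) fun p : ℝ × ℝ => h p.1 p.2)
    (heq : ∀ t ≥ (0 : ℝ), ∀ z ≥ (0 : ℝ), deriv (fun s => h s z) t = deriv (deriv (h t)) z)
    (h0 : ∀ t ≥ (0 : ℝ), h t 0 = 0) (hi : ∀ z : ℝ, h 0 z = h₀ z)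
    (E : ℝ) (hE0 : 0 ≤ E) (hE : HmuSq 3 1 0 h₀ ≤ ENNReal.ofReal E)
    (hm : ∫ z in Set.Ioi (0 : ℝ), z * h₀ z = 0)
    (M : ℝ) (hM : ∀ t ≥ (0 : ℝ), HmuSq 3 1 t (h t) ≤ ENNReal.ofReal M) (T : ℝ) (hT : 0 ≤ T) :
    ∀ k < 4, ∀ N > 0, ε / 12 / 256 * (1 + T) ^ (3 / 2 - ε) * (1 + T) ^ (k + 2) *
      (∫ z in (0:ℝ)..N, Real.exp (sg T * z ^ 2) * (deriv^[k] (h T)) z ^ 2) ≤ 96 * E := by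
  have hh0 : h 0 = h₀ := funext hi
  have cD : ∀ j t, Continuous (deriv^[j] (h t)) := fun j t =>
    (sm_iter h hh j).continuous.comp (Continuous.prodMk_right t)
  have hsg : sg 0 = 1 / 4 := by rw [sg]; norm_num
  have hE4 : ∀ i < 4, ∀ R > 0, ∫ z in (0:ℝ)..R, Real.exp (1 / 4 * z ^ 2) * (deriv^[i] h₀) z ^ 2 ≤ E := by
    intro i hi R hR
    have := h_bd 0 E R hE0 hR h₀ i hi (by rw [← hh0]; exact cD i 0) hE
    rwa [hsg] at this
  obtain ⟨F, G, hF, hG, hF0, bG, bF⟩ := double_anti h₀ (by rw [← hh0]; exact cD 0 0) E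
    (hE4 0 (by norm_num)) hm
  have hg := gch_chain h F G h₀ hh heq h0 hi hF hG hF0
  have bE : ∀ R > 0, ∀ k < 6, QQ R (fun _ => 1) (gch h F G k) 0 ≤ 16 * E := by
    intro R hR k hk
    rw [QQ, hsg]
    simp only [one_mul]
    match k with
    | 0 => simpa [gch] using bF R hR
    | 1 =>
      have := bG R hR
      simp only [gch, intervalIntegral.integral_same, add_zero]
      linarith
    | k + 2 =>
      have := hE4 k (by omega) R hR
      simp only [gch, hh0]
      linarith
  set M' := max M 0 with hM'
  have bM1 : ∀ R > 0, ∀ t ≥ 0, ∀ k < 4, QQ R (fun _ => 1) (gch h F G (k + 2)) t ≤ M' := by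
    intro R hR t ht k hk
    rw [QQ]
    simp only [one_mul, gch]
    exact h_bd t M' R (le_max_right _ _) hR (h t) k hk (cD k t)
      ((hM t ht).trans (ENNReal.ofReal_le_ofReal (le_max_left _ _)))
  set M2 := max M' (Real.exp T * (16 * E + M' * T)) with hM2
  have hM'0 : 0 ≤ M' := le_max_right _ _
  have bM : ∀ R > 0, ∀ t, 0 < t → t ≤ T → ∀ k < 6, QQ R (fun _ => 1) (gch h F G k) t ≤ M2 := by
    intro R hR t ht htT k hk
    by_cases hk2 : k < 2
    · refine le_trans ?_ (le_max_right _ _)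
      refine (crude hg k R hR T M' (16 * E) (bE R hR k hk) ?_ t ht.le htT).trans ?_
      · intro t ht _
        exact bM1 R hR t ht.le k (by omega)
      · rw [max_eq_left hM'0]
        gcongr
    · obtain ⟨j, rfl⟩ : ∃ j, k = j + 2 := ⟨k - 2, by omega⟩
      exact (bM1 R hR t ht.le j (by omega)).trans (le_max_left _ _)
  intro k hk N hN
  have := chain_decay hg ε hε hε1 T M2 (16 * E) (hM'0.trans (le_max_left _ _)) hT bE bM (k + 2) (by omega) N hN
  rw [QQ] at this
  simp only [one_mul, gch] at this
  linarith

lemma main_pt (ε : ℝ) (hε : 0 < ε) (h : ℝ → ℝ → ℝ)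
    (hh : ContDiff ℝ (⊤ : ℕ∞) fun p : ℝ × ℝ => h p.1 p.2) (E : ℝ) (hE0 : 0 ≤ E) (T : ℝ) (hT : 0 ≤ T)
    (hQ : ∀ k < 4, ∀ N > 0, ε / 12 / 256 * (1 + T) ^ (3 / 2 - ε) * (1 + T) ^ (k + 2) *
      (∫ z in (0:ℝ)..N, Real.exp (sg T * z ^ 2) * (deriv^[k] (h T)) z ^ 2) ≤ 96 * E)
    (z : ℝ) (hz : 0 < z) (B : ℝ)
    (hB : B = Real.sqrt (768 / (ε / 12 / 256)) * (1 + T) ^ (-(8 - 2 * ε) / 4) * Real.sqrt E) :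
    |deriv (h T) z| ≤ B ∧ |z * deriv (h T) z| ≤ B ∧ |z * deriv (deriv (h T)) z| ≤ B := by
  set s := 1 + T with hs
  have hs1 : 1 ≤ s := by linarith
  have hs0 : 0 < s := by linarith
  set c := ε / 12 / 256 with hc
  have hc0 : 0 < c := by positivity
  set P := s ^ (3 / 2 - ε) with hP
  have hP0 : 0 < P := Real.rpow_pos_of_pos hs0 _
  set w := Real.sqrt s with hw
  have hw0 : 0 < w := Real.sqrt_pos.2 hs0
  have hws : s = w ^ 2 := (Real.sq_sqrt hs0.le).symm
  set X := 96 * E / (c * P) with hX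
  have hX0 : 0 ≤ X := by positivity
  have hQ2 : ∀ k < 4, ∀ N > 0,
      (∫ z in (0:ℝ)..N, Real.exp (sg T * z ^ 2) * (deriv^[k] (h T)) z ^ 2) ≤ X / s ^ (k + 2) := by
    intro k hk N hN
    have := hQ k hk N hN
    rw [hX, div_div, le_div_iff₀ (by positivity)]
    linarith
  have dD : ∀ j z, HasDerivAt (deriv^[j] (h T)) ((deriv^[j+1] (h T)) z) z := by
    intro j z
    rw [Function.iterate_succ_apply']
    exact (sm_dz (fun t => deriv^[j] (h t)) (sm_iter h hh j) T z).differentiableAt.hasDerivAt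
  have cD : ∀ j, Continuous (deriv^[j] (h T)) := fun j =>
    continuous_iff_continuousAt.2 fun z => (dD j z).continuousAt
  have hpt : ∀ k < 3, Real.exp (sg T * z ^ 2) * (deriv^[k] (h T)) z ^ 2 ≤ 2 * (X / w ^ 5) / s ^ k := by
    intro k hk
    have := pointwise1d (sg T) (1 / w) _ _ (sg_pos hT) (by positivity) _ _ (cD k) (cD (k+1)) (fun z _ => dD k z)
      (hQ2 k (by omega)) (hQ2 (k+1) (by omega)) z hz
    refine this.trans (le_of_eq ?_)
    rw [hws]
    field_simp
    ring
  set Y := X / w ^ 5 with hY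
  have hY0 : 0 ≤ Y := by positivity
  have hq : (s ^ (-(8 - 2 * ε) / 4)) ^ 2 * (P * w ^ 5) = 1 := by
    have e1 : w ^ 5 = s ^ ((5:ℝ) / 2) := by
      rw [hw, Real.sqrt_eq_rpow, ← Real.rpow_natCast, ← Real.rpow_mul hs0.le]; norm_num
    have e2 : (s ^ (-(8 - 2 * ε) / 4)) ^ 2 = s ^ (-(8 - 2 * ε) / 4 * 2) := by
      rw [Real.rpow_mul hs0.le]; norm_cast
    rw [e1, e2, hP, ← Real.rpow_add hs0, ← Real.rpow_add hs0]
    have : -(8 - 2 * ε) / 4 * 2 + (3 / 2 - ε + 5 / 2) = 0 := by ring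
    rw [this, Real.rpow_zero]
  have hB0 : 0 ≤ B := by rw [hB]; positivity
  have hBY : B ^ 2 = 8 * Y := by
    rw [hB, mul_pow, mul_pow, Real.sq_sqrt hE0, Real.sq_sqrt (by positivity), hY, hX,
      eq_one_div_of_mul_eq_one_left hq]
    field_simp
    ring
  set W := Real.exp (sg T * z ^ 2) with hW
  have hW1 : 1 ≤ W := Real.one_le_exp (mul_nonneg (sg_pos hT).le (sq_nonneg z))
  have hzW : z ^ 2 ≤ 4 * s * W := by
    have h1 := Real.add_one_le_exp (sg T * z ^ 2)
    rw [← hW] at h1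
    have h2 : z ^ 2 = 4 * s * (sg T * z ^ 2) := by rw [sg, ← hs]; field_simp
    rw [h2]
    have : sg T * z ^ 2 ≤ W := by linarith
    gcongr
  have p1 := hpt 1 (by norm_num)
  have p2 := hpt 2 (by norm_num)
  simp only [Function.iterate_succ, Function.iterate_zero, Function.comp, id] at p1 p2
  rw [le_div_iff₀ (by positivity)] at p1 p2
  generalize deriv (deriv (h T)) z = b at p2 ⊢
  generalize deriv (h T) z = a at p1 ⊢
  have hW0 : 0 ≤ W := by linarith
  have q1 : (z * a) ^ 2 ≤ B ^ 2 := by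
    rw [hBY, mul_pow]
    calc z ^ 2 * a ^ 2 ≤ 4 * s * W * a ^ 2 := by gcongr
      _ = 4 * (W * a ^ 2 * s ^ 1) := by ring
      _ ≤ 4 * (2 * Y) := by gcongr
      _ = 8 * Y := by ring
  have q2 : (z * b) ^ 2 ≤ B ^ 2 := by
    rw [hBY, mul_pow]
    calc z ^ 2 * b ^ 2 ≤ 4 * s * W * b ^ 2 := by gcongr
      _ = 4 * (W * b ^ 2 * s ^ 1) := by ring
      _ ≤ 4 * (W * b ^ 2 * s ^ 2) := by gcongr; norm_num
      _ ≤ 4 * (2 * Y) := by gcongr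
      _ = 8 * Y := by ring
  have q0 : a ^ 2 ≤ B ^ 2 := by
    rw [hBY]
    calc a ^ 2 = 1 * a ^ 2 * 1 ^ 1 := by ring
      _ ≤ W * a ^ 2 * s ^ 1 := by gcongr
      _ ≤ 2 * Y := p1
      _ ≤ 8 * Y := by linarith
  exact ⟨abs_le_of_sq_le_sq q0 hB0, abs_le_of_sq_le_sq q1 hB0, abs_le_of_sq_le_sq q2 hB0⟩


/-- Refined decay for the heat equation on the half-line: if
`h ∈ L∞([0,∞); H³_μ)` solves `∂ₜh = ∂_z²h` with `h(t,0) = 0` and the initial datum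
`h₀ ∈ H³_{μ_in}` has vanishing first moment, then for every `0 < δ < 2` there is
`C_δ > 0`, depending only on `δ`, with
`‖∂_z h(t)‖_{L∞} + ‖z∂_z h(t)‖_{L∞} + ‖z∂_z² h(t)‖_{L∞} ≤ C_δ‖h₀‖_{H³_{μ_in}}(1+t)^{-(8-δ)/4}`. -/
theorem statement5 (δ : ℝ) (hδ0 : 0 < δ) (hδ2 : δ < 2) :
    ∃ C : ℝ, 0 < C ∧
      ∀ (h : ℝ → ℝ → ℝ) (h₀ : ℝ → ℝ),
        (ContDiff ℝ (⊤ : ℕ∞) fun p : ℝ × ℝ => h p.1 p.2) →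
        (∀ t ≥ (0 : ℝ), ∀ z ≥ (0 : ℝ),
          deriv (fun s => h s z) t = deriv (deriv (h t)) z) →
        (∀ t ≥ (0 : ℝ), h t 0 = 0) →
        (∀ z : ℝ, h 0 z = h₀ z) →
        HmuSq 3 1 0 h₀ < ⊤ →
        (∫ z in Set.Ioi (0 : ℝ), z * h₀ z = 0) →
        (∃ M : ℝ, ∀ t ≥ (0 : ℝ), HmuSq 3 1 t (h t) ≤ ENNReal.ofReal M) →
        ∀ t ≥ (0 : ℝ),
          linfPos (deriv (h t))
              + linfPos (fun z => z * deriv (h t) z)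
              + linfPos (fun z => z * deriv (deriv (h t)) z)
            ≤ ENNReal.ofReal (C * (1 + t) ^ (-(8 - δ) / 4)) *
                (HmuSq 3 1 0 h₀) ^ (1 / 2 : ℝ) := by
  refine ⟨3 * Real.sqrt (768 / (δ / 2 / 12 / 256)), by positivity, ?_⟩
  intro h h₀ hh heq h0 hi hfin hm hM t ht
  obtain ⟨M, hM⟩ := hM
  set E := (HmuSq 3 1 0 h₀).toReal with hE
  have hE0 : 0 ≤ E := ENNReal.toReal_nonneg
  have hEe : HmuSq 3 1 0 h₀ = ENNReal.ofReal E := (ENNReal.ofReal_toReal hfin.ne).symm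
  have hQ := main_QQ (δ / 2) (by linarith) (by linarith) h h₀ hh heq h0 hi E hE0 hEe.le hm M hM t ht
  have hpt := main_pt (δ / 2) (by linarith) h hh E hE0 t ht hQ
  rw [mul_div_cancel₀ δ (two_ne_zero)] at hpt
  set B := Real.sqrt (768 / (δ / 2 / 12 / 256)) * (1 + t) ^ (-(8 - δ) / 4) * Real.sqrt E with hB
  have hB0 : 0 ≤ B := by have : 0 ≤ 1 + t := by linarith
                         positivity
  have hR : ENNReal.ofReal (3 * Real.sqrt (768 / (δ / 2 / 12 / 256)) * (1 + t) ^ (-(8 - δ) / 4)) *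
      (HmuSq 3 1 0 h₀) ^ (1 / 2 : ℝ) = ENNReal.ofReal B + ENNReal.ofReal B + ENNReal.ofReal B := by
    rw [hEe, ENNReal.ofReal_rpow_of_nonneg hE0 (by norm_num), ← Real.sqrt_eq_rpow,
      ← ENNReal.ofReal_mul (by have : 0 ≤ 1 + t := by linarith
                               positivity),
      ← ENNReal.ofReal_add hB0 hB0, ← ENNReal.ofReal_add (by linarith) hB0, hB]
    congr 1
    ring
  rw [hR]
  refine add_le_add (add_le_add ?_ ?_) ?_
  · exact iSup₂_le fun z hz => ENNReal.ofReal_le_ofReal (hpt z hz B rfl).1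
  · exact iSup₂_le fun z hz => ENNReal.ofReal_le_ofReal (hpt z hz B rfl).2.1
  · exact iSup₂_le fun z hz => ENNReal.ofReal_le_ofReal (hpt z hz B rfl).2.2
end
end

section
/- Let H = H(t,z) be a smooth function on [0,∞) × [0,∞) satisfying (∂ₜ − ∂_z² + 2/(1+t)) H = 0 with Neumann boundary condition ∂_z H(t,0) = 0, and assume that for each t the functions H(t,·), z H(t,·), ∂_z H(t,·) lie in L²_μ, that μ(t,z) H(t,z) ∂_z H(t,z) → 0 and z μ(t,z) H(t,z)² → 0 as z → ∞, and that differentiation under the integral sign is justified. Then for every 0 < δ < 2 and every t ≥ 0: (1+t)^{(9−δ)/2} ‖H(t)‖²_{L²_μ} + δ ∫₀ᵗ (1+s)^{(9−δ)/2} ‖∂_z H(s)‖²_{L²_μ} ds ≤ ‖H(0)‖²_{L²_{μ_in}}. -/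
open MeasureTheory Filter Set

noncomputable section

lemma cont_deriv_snd (F : ℝ → ℝ → ℝ) (h : ContDiff ℝ (⊤ : ℕ∞) fun p : ℝ × ℝ => F p.1 p.2) :
    (ContDiff ℝ (⊤ : ℕ∞) fun p : ℝ × ℝ => deriv (F p.1) p.2) ∧
    ∀ t z, HasDerivAt (F t) (deriv (F t) z) z := by
  have hd : ∀ t z, HasDerivAt (F t) (fderiv ℝ (fun p : ℝ × ℝ => F p.1 p.2) (t, z) (0, 1)) z := by
    intro t z
    have h1 : HasFDerivAt (fun p : ℝ × ℝ => F p.1 p.2) _ (t, z) :=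
      ((h.differentiable (by simp)) (t, z)).hasFDerivAt
    have h2 : HasDerivAt (fun y : ℝ => (t, y)) ((0 : ℝ), (1 : ℝ)) z :=
      (hasDerivAt_const z t).prodMk (hasDerivAt_id z)
    exact h1.comp_hasDerivAt z h2
  refine ⟨?_, fun t z => by rw [(hd t z).deriv]; exact hd t z⟩
  have : (fun p : ℝ × ℝ => deriv (F p.1) p.2) =
      fun p => fderiv ℝ (fun p : ℝ × ℝ => F p.1 p.2) p (0, 1) := by
    funext p; exact (hd p.1 p.2).deriv
  rw [this]
  exact (h.fderiv_right (m := (⊤ : ℕ∞)) (by simp)).clm_apply contDiff_const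

lemma cont_deriv_fst (F : ℝ → ℝ → ℝ) (h : ContDiff ℝ (⊤ : ℕ∞) fun p : ℝ × ℝ => F p.1 p.2) :
    (ContDiff ℝ (⊤ : ℕ∞) fun p : ℝ × ℝ => deriv (fun s => F s p.2) p.1) ∧
    ∀ t z, HasDerivAt (fun s => F s z) (deriv (fun s => F s z) t) t := by
  have h' : ContDiff ℝ (⊤ : ℕ∞) fun p : ℝ × ℝ => (fun z t => F t z) p.1 p.2 :=
    h.comp (contDiff_snd.prodMk contDiff_fst)
  obtain ⟨h1, h2⟩ := cont_deriv_snd (fun z t => F t z) h'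
  exact ⟨h1.comp (contDiff_snd.prodMk contDiff_fst), fun t z => h2 z t⟩

lemma integrable_rect (T R : ℝ) (f : ℝ → ℝ → ℝ)
    (hf : ContinuousOn (fun p : ℝ × ℝ => f p.1 p.2) (Icc 0 T ×ˢ Icc 0 R)) :
    Integrable (Function.uncurry f)
      ((volume.restrict (Ioc 0 T)).prod (volume.restrict (Ioc 0 R))) := by
  rw [Measure.prod_restrict]
  have : IntegrableOn (Function.uncurry f) (Icc 0 T ×ˢ Icc 0 R) (volume.prod volume) :=
    ContinuousOn.integrableOn_compact (isCompact_Icc.prod isCompact_Icc) hf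
  exact this.mono_set (prod_mono Ioc_subset_Icc_self Ioc_subset_Icc_self)

lemma slice_z {T R : ℝ} {f : ℝ → ℝ → ℝ}
    (hf : ContinuousOn (fun p : ℝ × ℝ => f p.1 p.2) (Icc 0 T ×ˢ Icc 0 R))
    {s : ℝ} (hs : s ∈ Icc 0 T) : ContinuousOn (f s) (Icc 0 R) :=
  hf.comp (f := fun z => (s, z)) (by fun_prop) (fun z hz => ⟨hs, hz⟩)

lemma slice_t {T R : ℝ} {f : ℝ → ℝ → ℝ}
    (hf : ContinuousOn (fun p : ℝ × ℝ => f p.1 p.2) (Icc 0 T ×ˢ Icc 0 R))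
    {z : ℝ} (hz : z ∈ Icc 0 R) : ContinuousOn (fun s => f s z) (Icc 0 T) :=
  hf.comp (f := fun s => (s, z)) (by fun_prop) (fun s hs => ⟨hs, hz⟩)

lemma core (T R : ℝ) (hT : 0 ≤ T) (hR : 0 ≤ R) (u ut f fz g e : ℝ → ℝ → ℝ)
    (cu : ContinuousOn (fun p : ℝ × ℝ => u p.1 p.2) (Icc 0 T ×ˢ Icc 0 R))
    (cut : ContinuousOn (fun p : ℝ × ℝ => ut p.1 p.2) (Icc 0 T ×ˢ Icc 0 R))
    (cfz : ContinuousOn (fun p : ℝ × ℝ => fz p.1 p.2) (Icc 0 T ×ˢ Icc 0 R))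
    (cg : ContinuousOn (fun p : ℝ × ℝ => g p.1 p.2) (Icc 0 T ×ˢ Icc 0 R))
    (ce : ContinuousOn (fun p : ℝ × ℝ => e p.1 p.2) (Icc 0 T ×ˢ Icc 0 R))
    (du : ∀ s ∈ Icc 0 T, ∀ z ∈ Icc 0 R, HasDerivAt (fun s => u s z) (ut s z) s)
    (df : ∀ s ∈ Icc 0 T, ∀ z ∈ Icc 0 R, HasDerivAt (fun z => f s z) (fz s z) z)
    (f0 : ∀ s ∈ Icc 0 T, f s 0 = 0) (fR : ∀ s ∈ Icc 0 T, f s R = 0)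
    (hle : ∀ s ∈ Icc 0 T, ∀ z ∈ Icc 0 R, ut s z + g s z ≤ fz s z + e s z) :
    (∫ z in Ioc 0 R, u T z) + ∫ s in Ioc 0 T, ∫ z in Ioc 0 R, g s z
      ≤ (∫ z in Ioc 0 R, u 0 z) + ∫ s in Ioc 0 T, ∫ z in Ioc 0 R, e s z := by
  have iz : ∀ {f : ℝ → ℝ}, ContinuousOn f (Icc 0 R) → IntegrableOn f (Ioc 0 R) :=
    fun h => (h.integrableOn_compact isCompact_Icc).mono_set Ioc_subset_Icc_self
  have h1 : (∫ z in Ioc 0 R, u T z) - (∫ z in Ioc 0 R, u 0 z)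
      = ∫ s in Ioc 0 T, ∫ z in Ioc 0 R, ut s z := by
    rw [integral_integral_swap (integrable_rect T R ut cut),
      ← integral_sub (iz (slice_z cu ⟨hT, le_rfl⟩)) (iz (slice_z cu ⟨le_rfl, hT⟩))]
    refine setIntegral_congr_fun measurableSet_Ioc fun z hz => ?_
    have hz' := Ioc_subset_Icc_self hz
    rw [← intervalIntegral.integral_of_le hT]
    refine (intervalIntegral.integral_eq_sub_of_hasDerivAt (f := fun s => u s z) ?_ ?_).symm
    · intro s hs; rw [uIcc_of_le hT] at hs; exact du s hs z hz'
    · apply ContinuousOn.intervalIntegrable; rw [uIcc_of_le hT]; exact slice_t cut hz'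
  have h2 : ∀ s ∈ Icc 0 T, ∫ z in Ioc 0 R, fz s z = 0 := by
    intro s hs
    rw [← intervalIntegral.integral_of_le hR,
      intervalIntegral.integral_eq_sub_of_hasDerivAt (f := fun z => f s z)]
    · simp [f0 s hs, fR s hs]
    · intro z hz; rw [uIcc_of_le hR] at hz; exact df s hs z hz
    · apply ContinuousOn.intervalIntegrable; rw [uIcc_of_le hR]; exact slice_z cfz hs
  have h3 : (∫ s in Ioc 0 T, ∫ z in Ioc 0 R, ut s z) + ∫ s in Ioc 0 T, ∫ z in Ioc 0 R, g s z
      ≤ ∫ s in Ioc 0 T, ∫ z in Ioc 0 R, e s z := by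
    have i1 := (integrable_rect T R ut cut).integral_prod_left
    have i2 := (integrable_rect T R g cg).integral_prod_left
    have i3 := (integrable_rect T R e ce).integral_prod_left
    simp only [Function.uncurry] at i1 i2 i3
    rw [← integral_add i1 i2]
    refine setIntegral_mono_on (i1.add i2) i3 measurableSet_Ioc fun s hs => ?_
    have hs' := Ioc_subset_Icc_self hs
    have j := h2 s hs'
    have a1 := iz (slice_z cut hs')
    have a2 := iz (slice_z cg hs')
    have a3 := iz (slice_z ce hs')
    have a4 := iz (slice_z cfz hs')
    rw [← integral_add a1 a2]
    have : ∫ z in Ioc 0 R, e s z = ∫ z in Ioc 0 R, (fz s z + e s z) := by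
      rw [integral_add a4 a3, j, zero_add]
    rw [this]
    exact setIntegral_mono_on (a1.add a2) (a4.add a3) measurableSet_Ioc
      fun z hz => hle s hs' z (Ioc_subset_Icc_self hz)
  linarith

lemma cont_aux {S : Set (ℝ × ℝ)} {w m i h p q : ℝ × ℝ → ℝ} (R a δ : ℝ)
    (hw : ContinuousOn w S) (hm : ContinuousOn m S) (hi : ContinuousOn i S)
    (hh : ContinuousOn h S) (hp : ContinuousOn p S) (hq : ContinuousOn q S) :
    ContinuousOn (fun x => w x * ((1 - x.2 ^ 2 / R ^ 2) ^ 2 * (m x * h x ^ 2))) S ∧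
    ContinuousOn (fun x => w x * m x * (1 - x.2 ^ 2 / R ^ 2) ^ 2 *
      (a * i x * h x ^ 2 - x.2 ^ 2 / 4 * i x ^ 2 * h x ^ 2
        + 2 * h x * (q x - 2 * i x * h x))) S ∧
    ContinuousOn (fun x => w x * m x *
      (2 * (2 * (1 - x.2 ^ 2 / R ^ 2) * (- (2 * x.2) / R ^ 2) * h x * p x
          + (1 - x.2 ^ 2 / R ^ 2) ^ 2 * (x.2 / 2 * i x * h x * p x
            + p x ^ 2 + h x * q x))
        + (1 - δ) / 2 * i x * (2 * (1 - x.2 ^ 2 / R ^ 2) * (- (2 * x.2) / R ^ 2) * x.2 * h x ^ 2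
          + (1 - x.2 ^ 2 / R ^ 2) ^ 2 * (h x ^ 2 + x.2 ^ 2 / 2 * i x * h x ^ 2
            + 2 * x.2 * h x * p x)))) S ∧
    ContinuousOn (fun x => δ * (w x * ((1 - x.2 ^ 2 / R ^ 2) ^ 2 * (m x * p x ^ 2)))) S ∧
    ContinuousOn (fun x => 16 / (2 - δ) * x.2 ^ 2 / R ^ 4 * (w x * (m x * h x ^ 2))) S := by
  refine ⟨?_, ?_, ?_, ?_, ?_⟩ <;> fun_prop

set_option maxHeartbeats 2000000 in
lemma energy_R (H : ℝ → ℝ → ℝ)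
    (hsm : ContDiff ℝ (⊤ : ℕ∞) fun p : ℝ × ℝ => H p.1 p.2)
    (heq : ∀ t ≥ (0 : ℝ), ∀ z ≥ (0 : ℝ),
      deriv (fun s => H s z) t - deriv (deriv (H t)) z + 2 / (1 + t) * H t z = 0)
    (hbc : ∀ t ≥ (0 : ℝ), deriv (H t) 0 = 0)
    (δ : ℝ) (h0 : 0 < δ) (h2 : δ < 2) (T R : ℝ) (hT : 0 ≤ T) (hR : 0 < R) :
    (∫ z in Ioc 0 R, (1 + T) ^ ((9 - δ) / 2) * ((1 - z ^ 2 / R ^ 2) ^ 2 *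
        (mu 1 T z * H T z ^ 2)))
      + ∫ s in Ioc 0 T, ∫ z in Ioc 0 R, δ * ((1 + s) ^ ((9 - δ) / 2) *
        ((1 - z ^ 2 / R ^ 2) ^ 2 * (mu 1 s z * deriv (H s) z ^ 2)))
      ≤ (∫ z in Ioc 0 R, (1 + (0:ℝ)) ^ ((9 - δ) / 2) * ((1 - z ^ 2 / R ^ 2) ^ 2 *
        (mu 1 0 z * H 0 z ^ 2)))
      + ∫ s in Ioc 0 T, ∫ z in Ioc 0 R, 16 / (2 - δ) * z ^ 2 / R ^ 4 *
        ((1 + s) ^ ((9 - δ) / 2) * (mu 1 s z * H s z ^ 2)) := by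
  obtain ⟨st, dt⟩ := cont_deriv_fst H hsm
  obtain ⟨sz, dz⟩ := cont_deriv_snd H hsm
  obtain ⟨szz, dzz⟩ := cont_deriv_snd (fun t z => deriv (H t) z) sz
  have cH := hsm.continuous
  have cz := sz.continuous
  have czz := szz.continuous
  have czz' : Continuous fun p : ℝ × ℝ => deriv (deriv (H p.1)) p.2 := czz
  have dzz' : ∀ t z, HasDerivAt (deriv (H t)) (deriv (deriv (H t)) z) z := dzz
  set a := (9 - δ) / 2 with ha
  have cW : ContinuousOn (fun p : ℝ × ℝ => (1 + p.1) ^ a) (Icc 0 T ×ˢ Icc 0 R) := by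
    refine ContinuousOn.rpow_const (by fun_prop) fun p hp => Or.inl ?_
    have := hp.1.1; positivity
  have ci : ContinuousOn (fun p : ℝ × ℝ => (1 + p.1)⁻¹) (Icc 0 T ×ˢ Icc 0 R) := by
    refine ContinuousOn.inv₀ (by fun_prop) fun p hp => ?_
    have := hp.1.1; positivity
  have cm : ContinuousOn (fun p : ℝ × ℝ => mu 1 p.1 p.2) (Icc 0 T ×ˢ Icc 0 R) := by
    unfold mu
    refine Real.continuous_exp.comp_continuousOn (ContinuousOn.div (by fun_prop) (by fun_prop) fun p hp => ?_)
    have := hp.1.1; positivity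
  obtain ⟨c1, c2, c3, c4, c5⟩ := cont_aux R a δ cW cm ci cH.continuousOn cz.continuousOn czz'.continuousOn
  refine core T R hT hR.le
    (fun s z => (1 + s) ^ a * ((1 - z ^ 2 / R ^ 2) ^ 2 * (mu 1 s z * H s z ^ 2)))
    (fun s z => (1 + s) ^ a * mu 1 s z * (1 - z ^ 2 / R ^ 2) ^ 2 *
      (a * (1 + s)⁻¹ * H s z ^ 2 - z ^ 2 / 4 * (1 + s)⁻¹ ^ 2 * H s z ^ 2
        + 2 * H s z * (deriv (deriv (H s)) z - 2 * (1 + s)⁻¹ * H s z)))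
    (fun s z => (1 + s) ^ a * (2 * ((1 - z ^ 2 / R ^ 2) ^ 2 * (mu 1 s z * (H s z * deriv (H s) z)))
      + (1 - δ) / 2 * (1 + s)⁻¹ * (z * ((1 - z ^ 2 / R ^ 2) ^ 2 * (mu 1 s z * H s z ^ 2)))))
    (fun s z => (1 + s) ^ a * mu 1 s z *
      (2 * (2 * (1 - z ^ 2 / R ^ 2) * (- (2 * z) / R ^ 2) * H s z * deriv (H s) z
          + (1 - z ^ 2 / R ^ 2) ^ 2 * (z / 2 * (1 + s)⁻¹ * H s z * deriv (H s) z
            + deriv (H s) z ^ 2 + H s z * deriv (deriv (H s)) z))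
        + (1 - δ) / 2 * (1 + s)⁻¹ * (2 * (1 - z ^ 2 / R ^ 2) * (- (2 * z) / R ^ 2) * z * H s z ^ 2
          + (1 - z ^ 2 / R ^ 2) ^ 2 * (H s z ^ 2 + z ^ 2 / 2 * (1 + s)⁻¹ * H s z ^ 2
            + 2 * z * H s z * deriv (H s) z))))
    _ _ ?_ ?_ ?_ ?_ ?_ ?_ ?_ ?_ ?_ ?_
  · exact c1
  · exact c2
  · exact c3
  · exact c4
  · exact c5
  · intro s hs z hz
    have hs0 : 0 < 1 + s := by linarith [hs.1]
    have e1 : HasDerivAt (fun s : ℝ => (1 + s) ^ a) (a * (1 + s) ^ (a - 1)) s := by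
      simpa using ((hasDerivAt_id s).const_add 1).rpow_const (p := a) (Or.inl hs0.ne')
    have e2 : HasDerivAt (fun s : ℝ => mu 1 s z) (mu 1 s z * (- z ^ 2 / 4 * (1 + s)⁻¹ ^ 2)) s := by
      unfold mu
      apply HasDerivAt.exp
      have := (((hasDerivAt_id s).const_add 1).const_mul 4).fun_inv (by simp; exact hs0.ne')
      refine (this.const_mul (1 * z ^ 2)).congr_deriv ?_
      simp; field_simp
    have e3 := dt s z
    have := e1.mul ((e2.mul (e3.pow 2)).const_mul ((1 - z ^ 2 / R ^ 2) ^ 2))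
    refine this.congr_deriv ?_
    have q := heq s hs.1 z hz.1
    have q' : deriv (fun s => H s z) s = deriv (deriv (H s)) z - 2 * (1 + s)⁻¹ * H s z := by
      rw [div_eq_mul_inv] at q; linarith
    rw [q', Real.rpow_sub_one hs0.ne']
    simp
    ring
  · intro s hs z hz
    have hs0 : 0 < 1 + s := by linarith [hs.1]
    have e2 : HasDerivAt (fun z : ℝ => mu 1 s z) (mu 1 s z * (z / 2 * (1 + s)⁻¹)) z := by
      unfold mu
      apply HasDerivAt.exp
      refine ((((hasDerivAt_id z).pow 2).const_mul 1).div_const (4 * (1 + s))).congr_deriv ?_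
      simp; field_simp; ring
    have e3 := dz s z
    have e4 := dzz' s z
    have e5 : HasDerivAt (fun z : ℝ => (1 - z ^ 2 / R ^ 2) ^ 2)
        (2 * (1 - z ^ 2 / R ^ 2) * (- (2 * z) / R ^ 2)) z := by
      refine (((((hasDerivAt_id z).pow 2).div_const (R ^ 2)).const_sub 1).pow 2).congr_deriv ?_
      simp; ring
    have := (((e5.mul (e2.mul (e3.mul e4))).const_mul 2).add
      (((hasDerivAt_id z).mul (e5.mul (e2.mul (e3.pow 2)))).const_mul
        ((1 - δ) / 2 * (1 + s)⁻¹))).const_mul ((1 + s) ^ a)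
    refine this.congr_deriv ?_
    simp
    ring
  · intro s hs; simp [hbc s hs.1]
  · intro s hs; simp [hR.ne']
  · intro s hs z hz
    have hs0 : 0 < 1 + s := by linarith [hs.1]
    have hm : 0 < mu 1 s z := Real.exp_pos _
    have hW : 0 < (1 + s) ^ a := Real.rpow_pos_of_pos hs0 _
    have hk : 0 < 2 - δ := by linarith
    have hχ : 0 ≤ 1 - z ^ 2 / R ^ 2 := by
      rw [sub_nonneg, div_le_one (by positivity)]
      exact pow_le_pow_left₀ hz.1 hz.2 2
    have hi : 0 < (1 + s)⁻¹ := inv_pos.2 hs0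
    rw [← sub_nonneg]
    have key : 0 ≤ (1 + s) ^ a * mu 1 s z * ((2 - δ) * ((1 - z ^ 2 / R ^ 2) *
        (deriv (H s) z + z / 2 * (1 + s)⁻¹ * H s z) - 4 / (2 - δ) * z / R ^ 2 * H s z) ^ 2
        + 2 * (1 + δ) * (1 + s)⁻¹ * (1 - z ^ 2 / R ^ 2) * (z ^ 2 / R ^ 2) * H s z ^ 2) := by
      positivity
    convert key using 1
    rw [ha]
    generalize (1 + s)⁻¹ = i
    generalize (1 + s) ^ ((9 - δ) / 2) = W
    generalize mu 1 s z = m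
    field_simp
    ring

lemma cut_mono {x y z : ℝ} (hx : 0 < x) (hxy : x ≤ y) (hz : 0 < z) (hzx : z ≤ x) :
    (1 - z ^ 2 / x ^ 2) ^ 2 ≤ (1 - z ^ 2 / y ^ 2) ^ 2 := by
  have h1 : z ^ 2 / x ^ 2 ≤ 1 := by
    rw [div_le_one (by positivity)]; exact pow_le_pow_left₀ hz.le hzx 2
  have h2 : z ^ 2 / y ^ 2 ≤ z ^ 2 / x ^ 2 := by gcongr
  apply pow_le_pow_left₀ <;> linarith

/-- truncated weighted norm -/
def Ltr (n : ℕ) (t : ℝ) (h : ℝ → ℝ) : ENNReal :=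
  ∫⁻ z in Ioc (0 : ℝ) (n + 1),
    ENNReal.ofReal ((1 - z ^ 2 / ((n : ℝ) + 1) ^ 2) ^ 2 * (mu 1 t z * h z ^ 2))

lemma Ltr_eq (n : ℕ) (t : ℝ) (h : ℝ → ℝ) : Ltr n t h = ∫⁻ z in Ioi (0 : ℝ),
    (Iic ((n : ℝ) + 1)).indicator (fun z =>
    ENNReal.ofReal ((1 - z ^ 2 / ((n : ℝ) + 1) ^ 2) ^ 2 * (mu 1 t z * h z ^ 2))) z := by
  rw [lintegral_indicator measurableSet_Iic, Measure.restrict_restrict measurableSet_Iic, Ltr,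
    inter_comm, Ioi_inter_Iic]

lemma mu_cont (t : ℝ) : Continuous (mu 1 t) := by
  unfold mu; fun_prop

lemma ind_mono (t : ℝ) (h : ℝ → ℝ) (z : ℝ) (hz : 0 < z) :
    Monotone fun n : ℕ => (Iic ((n : ℝ) + 1)).indicator (fun z =>
    ENNReal.ofReal ((1 - z ^ 2 / ((n : ℝ) + 1) ^ 2) ^ 2 * (mu 1 t z * h z ^ 2))) z := by
  intro a b hab
  have hab' : (a : ℝ) ≤ b := by exact_mod_cast hab
  simp only [indicator, mem_Iic]
  split_ifs with h1 h2
  · apply ENNReal.ofReal_le_ofReal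
    have hm : 0 ≤ mu 1 t z := (Real.exp_pos _).le
    exact mul_le_mul_of_nonneg_right (cut_mono (by positivity) (by linarith) hz h1) (by positivity)
  · exact absurd (h1.trans (by linarith)) h2
  · exact zero_le
  · exact le_rfl

lemma Ltr_mono (t : ℝ) (h : ℝ → ℝ) : Monotone fun n => Ltr n t h := by
  intro a b hab
  simp only [Ltr_eq]
  exact setLIntegral_mono' measurableSet_Ioi fun z hz => ind_mono t h z hz hab

lemma Ltr_tendsto (t : ℝ) (h : ℝ → ℝ) (hc : Continuous h) :
    Tendsto (fun n => Ltr n t h) atTop (nhds (L2muSq 1 t h)) := by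
  simp only [Ltr_eq]
  unfold L2muSq
  have := mu_cont t
  apply lintegral_tendsto_of_tendsto_of_monotone
  · intro n
    apply AEMeasurable.indicator _ measurableSet_Iic
    apply Measurable.aemeasurable
    apply Measurable.ennreal_ofReal
    apply Continuous.measurable
    fun_prop
  · exact (ae_restrict_mem measurableSet_Ioi).mono fun z hz => ind_mono t h z hz
  · refine Eventually.of_forall fun z => ?_
    have h1 : Tendsto (fun n : ℕ => ENNReal.ofReal ((1 - z ^ 2 / ((n : ℝ) + 1) ^ 2) ^ 2 *
        (mu 1 t z * h z ^ 2))) atTop (nhds (ENNReal.ofReal (mu 1 t z * h z ^ 2))) := by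
      apply ENNReal.tendsto_ofReal
      have h2 : Tendsto (fun n : ℕ => ((n : ℝ) + 1)) atTop atTop :=
        tendsto_atTop_add_const_right _ _ tendsto_natCast_atTop_atTop
      have h3 : Tendsto (fun n : ℕ => z ^ 2 / ((n : ℝ) + 1) ^ 2) atTop (nhds 0) :=
        Tendsto.div_atTop tendsto_const_nhds ((tendsto_pow_atTop two_ne_zero).comp h2)
      simpa using ((h3.const_sub 1).pow 2).mul_const (mu 1 t z * h z ^ 2)
    refine h1.congr' ?_
    obtain ⟨N, hN⟩ := exists_nat_ge z
    filter_upwards [eventually_ge_atTop N] with n hn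
    have : (N : ℝ) ≤ n := by exact_mod_cast hn
    rw [indicator_of_mem]
    simp only [mem_Iic]; linarith

lemma Ltr_ofReal (n : ℕ) (t c : ℝ) (hc0 : 0 ≤ c) (h : ℝ → ℝ) (hc : Continuous h) :
    ENNReal.ofReal c * Ltr n t h = ENNReal.ofReal (∫ z in Ioc (0 : ℝ) (n + 1),
      c * ((1 - z ^ 2 / ((n : ℝ) + 1) ^ 2) ^ 2 * (mu 1 t z * h z ^ 2))) := by
  have := mu_cont t
  have hm : ∀ z, 0 ≤ mu 1 t z := fun z => (Real.exp_pos _).le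
  rw [integral_const_mul, ENNReal.ofReal_mul hc0, Ltr, ofReal_integral_eq_lintegral_ofReal]
  · exact (Continuous.integrableOn_Icc (by fun_prop)).mono_set Ioc_subset_Icc_self
  · exact Eventually.of_forall fun z => by have := hm z; simp only [Pi.zero_apply]; positivity

lemma Ltr_le (n : ℕ) (t : ℝ) (h : ℝ → ℝ) (hc : Continuous h) : Ltr n t h ≤ L2muSq 1 t h :=
  (Ltr_mono t h).ge_of_tendsto (Ltr_tendsto t h hc) n

lemma main_n (H : ℝ → ℝ → ℝ)
    (hsm : ContDiff ℝ (⊤ : ℕ∞) fun p : ℝ × ℝ => H p.1 p.2)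
    (heq : ∀ t ≥ (0 : ℝ), ∀ z ≥ (0 : ℝ),
      deriv (fun s => H s z) t - deriv (deriv (H t)) z + 2 / (1 + t) * H t z = 0)
    (hbc : ∀ t ≥ (0 : ℝ), deriv (H t) 0 = 0)
    (δ : ℝ) (h0 : 0 < δ) (h2 : δ < 2) (T : ℝ) (hT : 0 ≤ T) (M : ℝ)
    (hint : ∀ s ∈ Icc 0 T, IntegrableOn (fun z => mu 1 s z * H s z ^ 2) (Ioi 0))
    (hM : ∀ s ∈ Icc 0 T, ∫ z in Ioi 0, mu 1 s z * H s z ^ 2 ≤ M) (n : ℕ) :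
    AEMeasurable (fun s => ENNReal.ofReal ((1 + s) ^ ((9 - δ) / 2)) * Ltr n s (deriv (H s)))
      (volume.restrict (Ioc 0 T)) ∧
    ENNReal.ofReal ((1 + T) ^ ((9 - δ) / 2)) * Ltr n T (H T)
      + ENNReal.ofReal δ * ∫⁻ s in Ioc 0 T,
        ENNReal.ofReal ((1 + s) ^ ((9 - δ) / 2)) * Ltr n s (deriv (H s))
      ≤ L2muSq 1 0 (H 0) + ENNReal.ofReal
        (16 / (2 - δ) * (1 + T) ^ ((9 - δ) / 2) * M * T / ((n : ℝ) + 1) ^ 2) := by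
  have hk : 0 < 2 - δ := by linarith
  have hR : 0 < (n : ℝ) + 1 := by positivity
  have E := energy_R H hsm heq hbc δ h0 h2 T (n + 1) hT hR
  obtain ⟨sz, dz⟩ := cont_deriv_snd H hsm
  have cH := hsm.continuous
  have cz := sz.continuous
  have cHt : ∀ t, Continuous (H t) := fun t => cH.comp (f := fun z => (t, z)) (by fun_prop)
  have czt : ∀ t, Continuous (deriv (H t)) := fun t => cz.comp (f := fun z => (t, z)) (by fun_prop)
  set a := (9 - δ) / 2 with ha
  have ha0 : 0 ≤ a := by rw [ha]; linarith
  set R := (n : ℝ) + 1 with hRdef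
  have cW : ContinuousOn (fun p : ℝ × ℝ => (1 + p.1) ^ a) (Icc 0 T ×ˢ Icc 0 R) := by
    refine ContinuousOn.rpow_const (by fun_prop) fun p hp => Or.inl ?_
    have := hp.1.1; positivity
  have cm : ContinuousOn (fun p : ℝ × ℝ => mu 1 p.1 p.2) (Icc 0 T ×ˢ Icc 0 R) := by
    unfold mu
    refine Real.continuous_exp.comp_continuousOn (ContinuousOn.div (by fun_prop) (by fun_prop) fun p hp => ?_)
    have := hp.1.1; positivity
  obtain ⟨c1, c2, c3, c4, c5⟩ := cont_aux R a δ cW cm cm cH.continuousOn cz.continuousOn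
    cz.continuousOn
  obtain ⟨-, -, -, c6, -⟩ := cont_aux R a 1 cW cm cm cH.continuousOn cz.continuousOn
    cz.continuousOn
  have hm : ∀ t z, 0 ≤ mu 1 t z := fun t z => (Real.exp_pos _).le
  have hW : ∀ s ∈ Ioc 0 T, 0 ≤ (1 + s) ^ a := fun s hs =>
    Real.rpow_nonneg (by linarith [hs.1]) _
  have i6 : Integrable (fun s => ∫ z in Ioc 0 R, (1 + s) ^ a * ((1 - z ^ 2 / R ^ 2) ^ 2 *
      (mu 1 s z * deriv (H s) z ^ 2))) (volume.restrict (Ioc 0 T)) := by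
    have := (integrable_rect T R (fun s z => 1 * ((1 + s) ^ a * ((1 - z ^ 2 / R ^ 2) ^ 2 *
      (mu 1 s z * deriv (H s) z ^ 2)))) c6).integral_prod_left
    simpa only [Function.uncurry, one_mul] using this
  have i5 : Integrable (fun s => ∫ z in Ioc 0 R, 16 / (2 - δ) * z ^ 2 / R ^ 4 *
        ((1 + s) ^ a * (mu 1 s z * H s z ^ 2))) (volume.restrict (Ioc 0 T)) := by
    exact (integrable_rect T R (fun s z => 16 / (2 - δ) * z ^ 2 / R ^ 4 *
        ((1 + s) ^ a * (mu 1 s z * H s z ^ 2))) c5).integral_prod_left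
  have eqn : ∀ s ∈ Ioc 0 T, ENNReal.ofReal ((1 + s) ^ a) * Ltr n s (deriv (H s)) =
      ENNReal.ofReal (∫ z in Ioc 0 R, (1 + s) ^ a * ((1 - z ^ 2 / R ^ 2) ^ 2 *
      (mu 1 s z * deriv (H s) z ^ 2))) := fun s hs =>
    Ltr_ofReal n s _ (hW s hs) _ (czt s)
  have nn : ∀ s ∈ Ioc 0 T, 0 ≤ ∫ z in Ioc 0 R, (1 + s) ^ a * ((1 - z ^ 2 / R ^ 2) ^ 2 *
      (mu 1 s z * deriv (H s) z ^ 2)) := fun s hs => by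
    refine integral_nonneg fun z => ?_
    have := hm s z; have := hW s hs
    simp only [Pi.zero_apply]; positivity
  refine ⟨?_, ?_⟩
  · refine AEMeasurable.congr i6.aestronglyMeasurable.aemeasurable.ennreal_ofReal ?_
    filter_upwards [ae_restrict_mem measurableSet_Ioc] with s hs
    exact (eqn s hs).symm
  -- the error term
  have herr : ∫ s in Ioc 0 T, ∫ z in Ioc 0 R, 16 / (2 - δ) * z ^ 2 / R ^ 4 *
        ((1 + s) ^ a * (mu 1 s z * H s z ^ 2)) ≤
        16 / (2 - δ) * (1 + T) ^ a * M * T / R ^ 2 := by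
    have : ∀ s ∈ Ioc 0 T, ∫ z in Ioc 0 R, 16 / (2 - δ) * z ^ 2 / R ^ 4 *
        ((1 + s) ^ a * (mu 1 s z * H s z ^ 2)) ≤ 16 / (2 - δ) * (1 + T) ^ a / R ^ 2 * M := by
      intro s hs
      have hs' := Ioc_subset_Icc_self hs
      have hI : IntegrableOn (fun z => mu 1 s z * H s z ^ 2) (Ioc 0 R) :=
        (hint s hs').mono_set Ioc_subset_Ioi_self
      have hKpos : 0 ≤ 16 / (2 - δ) * (1 + T) ^ a / R ^ 2 := by
        have : 0 ≤ (1 + T) ^ a := Real.rpow_nonneg (by linarith) _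
        positivity
      calc _ ≤ ∫ z in Ioc 0 R, 16 / (2 - δ) * (1 + T) ^ a / R ^ 2 * (mu 1 s z * H s z ^ 2) := by
            refine setIntegral_mono_on ?_ (hI.const_mul _) measurableSet_Ioc fun z hz => ?_
            · exact ((slice_z (f := fun s z => 16 / (2 - δ) * z ^ 2 / R ^ 4 *
                ((1 + s) ^ a * (mu 1 s z * H s z ^ 2))) c5 hs').integrableOn_compact
                isCompact_Icc).mono_set Ioc_subset_Icc_self
            · have hms := hm s z
              rw [← mul_assoc (16 / (2 - δ) * z ^ 2 / R ^ 4)]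
              refine mul_le_mul_of_nonneg_right ?_ (by positivity)
              have hw1 : (1 + s) ^ a ≤ (1 + T) ^ a :=
                Real.rpow_le_rpow (by linarith [hs.1]) (by linarith [hs.2]) ha0
              have hz2 : z ^ 2 / R ^ 4 ≤ 1 / R ^ 2 := by
                rw [div_le_div_iff₀ (by positivity) (by positivity)]
                have := pow_le_pow_left₀ hz.1.le hz.2 2
                nlinarith [sq_nonneg R]
              calc _ = 16 / (2 - δ) * ((z ^ 2 / R ^ 4) * (1 + s) ^ a) := by ring
                _ ≤ 16 / (2 - δ) * ((1 / R ^ 2) * (1 + T) ^ a) := by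
                    have := hW s hs
                    gcongr
                _ = _ := by ring
        _ = 16 / (2 - δ) * (1 + T) ^ a / R ^ 2 * ∫ z in Ioc 0 R, (mu 1 s z * H s z ^ 2) :=
            integral_const_mul _ _
        _ ≤ _ := by
            refine mul_le_mul_of_nonneg_left (le_trans ?_ (hM s hs')) hKpos
            exact setIntegral_mono_set (hint s hs')
              (Eventually.of_forall fun z => by
                have := hm s z; simp only [Pi.zero_apply]; positivity)
              Ioc_subset_Ioi_self.eventuallyLE
    calc _ ≤ ∫ s in Ioc 0 T, 16 / (2 - δ) * (1 + T) ^ a / R ^ 2 * M :=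
          setIntegral_mono_on i5 (integrable_const _) measurableSet_Ioc this
      _ = _ := by simp [hT]; ring
  have e1 : ENNReal.ofReal ((1 + T) ^ a) * Ltr n T (H T) = _ :=
    Ltr_ofReal n T _ (Real.rpow_nonneg (by linarith) _) _ (cHt T)
  have e2 : ENNReal.ofReal ((1 + (0:ℝ)) ^ a) * Ltr n 0 (H 0) = _ :=
    Ltr_ofReal n 0 _ (Real.rpow_nonneg (by linarith) _) _ (cHt 0)
  have e3 : ENNReal.ofReal δ * ∫⁻ s in Ioc 0 T, ENNReal.ofReal ((1 + s) ^ a) * Ltr n s (deriv (H s))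
      = ENNReal.ofReal (∫ s in Ioc 0 T, ∫ z in Ioc 0 R, δ * ((1 + s) ^ a *
        ((1 - z ^ 2 / R ^ 2) ^ 2 * (mu 1 s z * deriv (H s) z ^ 2)))) := by
    simp only [integral_const_mul δ]
    rw [ENNReal.ofReal_mul h0.le, ofReal_integral_eq_lintegral_ofReal i6
      ((ae_restrict_mem measurableSet_Ioc).mono nn), setLIntegral_congr_fun measurableSet_Ioc eqn]
  rw [← hRdef] at e1 e2
  have p1 : 0 ≤ ∫ z in Ioc 0 R, (1 + T) ^ a * ((1 - z ^ 2 / R ^ 2) ^ 2 *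
        (mu 1 T z * H T z ^ 2)) := by
    refine integral_nonneg fun z => ?_
    have := hm T z; have : 0 ≤ (1 + T) ^ a := Real.rpow_nonneg (by linarith) _
    simp only [Pi.zero_apply]; positivity
  have p3 : 0 ≤ ∫ s in Ioc 0 T, ∫ z in Ioc 0 R, δ * ((1 + s) ^ a *
        ((1 - z ^ 2 / R ^ 2) ^ 2 * (mu 1 s z * deriv (H s) z ^ 2))) := by
    simp only [integral_const_mul δ]
    refine mul_nonneg h0.le ?_
    exact setIntegral_nonneg measurableSet_Ioc nn
  rw [e1, e3, ← ENNReal.ofReal_add p1 p3]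
  refine (ENNReal.ofReal_le_ofReal (E.trans (add_le_add_right herr _))).trans ?_
  refine ENNReal.ofReal_add_le.trans ?_
  rw [← e2]
  gcongr
  simpa using Ltr_le n 0 (H 0) (cHt 0)

/-- Weighted energy decay for the damped heat equation
`(∂ₜ − ∂_z² + 2/(1+t)) H = 0` with Neumann boundary condition: for every `0 < δ < 2`
and `t ≥ 0`,
`(1+t)^{(9−δ)/2} ‖H(t)‖²_{L²_μ} + δ ∫₀ᵗ (1+s)^{(9−δ)/2} ‖∂_zH(s)‖²_{L²_μ} ds ≤ ‖H(0)‖²_{L²_{μ_in}}`. -/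
theorem statement19 (H : ℝ → ℝ → ℝ)
    (hsm : ContDiff ℝ (⊤ : ℕ∞) fun p : ℝ × ℝ => H p.1 p.2)
    (heq : ∀ t ≥ (0 : ℝ), ∀ z ≥ (0 : ℝ),
      deriv (fun s => H s z) t - deriv (deriv (H t)) z + 2 / (1 + t) * H t z = 0)
    (hbc : ∀ t ≥ (0 : ℝ), deriv (H t) 0 = 0)
    (hmem : ∀ t ≥ (0 : ℝ),
      L2muSq 1 t (H t) < ⊤ ∧ L2muSq 1 t (fun z => z * H t z) < ⊤ ∧
        L2muSq 1 t (deriv (H t)) < ⊤)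
    (hlim1 : ∀ t ≥ (0 : ℝ),
      Tendsto (fun z => mu 1 t z * H t z * deriv (H t) z) atTop (nhds 0))
    (hlim2 : ∀ t ≥ (0 : ℝ),
      Tendsto (fun z => z * mu 1 t z * (H t z) ^ 2) atTop (nhds 0))
    (hdiff : ∀ t ≥ (0 : ℝ),
      HasDerivAt (fun s => ∫ z in Set.Ioi (0 : ℝ), mu 1 s z * (H s z) ^ 2)
        (∫ z in Set.Ioi (0 : ℝ), deriv (fun s => mu 1 s z * (H s z) ^ 2) t) t) :
    ∀ δ : ℝ, 0 < δ → δ < 2 →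
      ∀ t ≥ (0 : ℝ),
        ENNReal.ofReal ((1 + t) ^ ((9 - δ) / 2)) * L2muSq 1 t (H t)
            + ENNReal.ofReal δ *
                ∫⁻ s in Set.Ioc (0 : ℝ) t,
                  ENNReal.ofReal ((1 + s) ^ ((9 - δ) / 2)) * L2muSq 1 s (deriv (H s))
          ≤ L2muSq 1 0 (H 0) := by
  intro δ h0 h2 T hT
  obtain ⟨sz, dz⟩ := cont_deriv_snd H hsm
  have cH := hsm.continuous
  have cz := sz.continuous
  have cHt : ∀ t, Continuous (H t) := fun t => cH.comp (f := fun z => (t, z)) (by fun_prop)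
  have czt : ∀ t, Continuous (deriv (H t)) := fun t => cz.comp (f := fun z => (t, z)) (by fun_prop)
  have hint : ∀ s ∈ Icc 0 T, IntegrableOn (fun z => mu 1 s z * H s z ^ 2) (Ioi 0) := by
    intro s hs
    have h1 := (hmem s hs.1).1
    have := mu_cont s
    have := cHt s
    refine ⟨Continuous.aestronglyMeasurable (by fun_prop), ?_⟩
    rw [hasFiniteIntegral_iff_ofReal]
    · exact h1
    · refine Eventually.of_forall fun z => ?_
      have : 0 ≤ mu 1 s z := (Real.exp_pos _).le
      simp only [Pi.zero_apply]; positivity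
  have hcE : ContinuousOn (fun s => ∫ z in Ioi 0, mu 1 s z * H s z ^ 2) (Icc 0 T) :=
    fun s hs => (hdiff s hs.1).continuousAt.continuousWithinAt
  obtain ⟨M, hM⟩ := isCompact_Icc.bddAbove_image hcE
  have hM' : ∀ s ∈ Icc 0 T, ∫ z in Ioi 0, mu 1 s z * H s z ^ 2 ≤ M :=
    fun s hs => hM (mem_image_of_mem _ hs)
  have key := main_n H hsm heq hbc δ h0 h2 T hT M hint hM'
  have l1 : Tendsto (fun n : ℕ => ∫⁻ s in Ioc 0 T,
        ENNReal.ofReal ((1 + s) ^ ((9 - δ) / 2)) * Ltr n s (deriv (H s))) atTop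
      (nhds (∫⁻ s in Ioc 0 T,
        ENNReal.ofReal ((1 + s) ^ ((9 - δ) / 2)) * L2muSq 1 s (deriv (H s)))) := by
    apply lintegral_tendsto_of_tendsto_of_monotone
    · exact fun n => (key n).1
    · exact Eventually.of_forall fun s a b hab => by
        have := Ltr_mono s (deriv (H s)) hab
        exact mul_le_mul_right this _
    · exact Eventually.of_forall fun s =>
        ENNReal.Tendsto.const_mul (Ltr_tendsto s _ (czt s)) (Or.inr ENNReal.ofReal_ne_top)
  have l2 := (ENNReal.Tendsto.const_mul (Ltr_tendsto T _ (cHt T)) (Or.inr (ENNReal.ofReal_ne_top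
    (r := (1 + T) ^ ((9 - δ) / 2))))).add
    (ENNReal.Tendsto.const_mul l1 (Or.inr (ENNReal.ofReal_ne_top (r := δ))))
  have l3 : Tendsto (fun n : ℕ => L2muSq 1 0 (H 0) + ENNReal.ofReal
        (16 / (2 - δ) * (1 + T) ^ ((9 - δ) / 2) * M * T / ((n : ℝ) + 1) ^ 2)) atTop
        (nhds (L2muSq 1 0 (H 0) + ENNReal.ofReal 0)) := by
    refine tendsto_const_nhds.add (ENNReal.tendsto_ofReal ?_)
    have h2 : Tendsto (fun n : ℕ => ((n : ℝ) + 1)) atTop atTop :=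
      tendsto_atTop_add_const_right _ _ tendsto_natCast_atTop_atTop
    exact Tendsto.div_atTop tendsto_const_nhds ((tendsto_pow_atTop two_ne_zero).comp h2)
  rw [ENNReal.ofReal_zero, add_zero] at l3
  exact le_of_tendsto_of_tendsto' l2 l3 fun n => (key n).2
end
end
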